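/- For every natural number d, there exist a real polynomial P of degree d and a nonzero entire function w : ℂ → ℂ satisfying w''(z) + P(z)·w(z) = 0 for all z ∈ ℂ, such that every zero of w is real. -/

import Mathlib

open Complex Polynomial

section Part1
noncomputable def Dk (c h : ℝ) : ℕ → ℝ[X]
  | 0 => C 2
  | 1 => X - C c
  | (k+2) => (X - C c) * Dk c h (k+1) - C (h^2) * Dk c h k

lemma Dk_eval (c h : ℝ) (ζ : ℂ) (hζ : ζ ≠ 0) (k : ℕ) :
    aeval ((c:ℂ) + h * (ζ + ζ⁻¹)) (Dk c h k) = (h:ℂ)^k * (ζ^k + (ζ⁻¹)^k) := by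
  induction k using Nat.strong_induction_on with
  | _ k ih =>
    match k with
    | 0 => simp only [Dk, aeval_C, pow_zero]; simp; norm_num
    | 1 => simp [Dk]
    | k+2 =>
      simp only [Dk, map_sub, map_mul, aeval_X, aeval_C, ih (k+1) (by omega), ih k (by omega)]
      simp only [coe_algebraMap, ofReal_pow]
      have hu : ζ * ζ⁻¹ = 1 := mul_inv_cancel₀ hζ
      linear_combination (h:ℂ)^(k+2) * (ζ⁻¹^k + ζ^k) * hu

lemma Dk_deg (c h : ℝ) (k : ℕ) : (Dk c h k).natDegree ≤ k ∧ (1 ≤ k → (Dk c h k).coeff k = 1) ∧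
    (1 ≤ k → (Dk c h k).coeff (k-1) = - k * c) := by
  induction k using Nat.strong_induction_on with
  | _ k ih =>
    match k with
    | 0 => simp [Dk]
    | 1 => simp [Dk, coeff_X, coeff_C]
    | k+2 =>
      obtain ⟨a1, a2, a3⟩ := ih (k+1) (by omega)
      obtain ⟨b1, b2, b3⟩ := ih k (by omega)
      refine ⟨?_, fun _ => ?_, fun _ => ?_⟩
      · simp only [Dk]
        refine (natDegree_sub_le _ _).trans (max_le ?_ ?_)
        · refine natDegree_mul_le.trans ?_
          rw [natDegree_X_sub_C]; omega
        · refine natDegree_mul_le.trans ?_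
          rw [natDegree_C]; omega
      · simp only [Dk, sub_mul, coeff_sub, coeff_X_mul, coeff_C_mul]
        rw [a2 (by omega), coeff_eq_zero_of_natDegree_lt (show (Dk c h (k+1)).natDegree < k+2 by omega),
          coeff_eq_zero_of_natDegree_lt (show (Dk c h k).natDegree < k+2 by omega)]
        ring
      · simp only [Dk, sub_mul, coeff_sub, coeff_C_mul]
        rw [show k+2-1 = k+1 by omega]
        rw [coeff_X_mul, coeff_eq_zero_of_natDegree_lt (show (Dk c h k).natDegree < k+1 by omega)]
        have := a3 (by omega)
        rw [show k+1-1 = k by omega] at this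
        rw [this, a2 (by omega)]
        push_cast; ring

/-- symmetric / antisymmetric primitive -/
lemma exists_Qb (c h : ℝ) (K : ℕ) : ∀ E : ℝ[X], E.natDegree ≤ K →
    ∃ (N : ℝ) (Q b : ℝ[X]), Q.natDegree ≤ K ∧
      (1 ≤ K → Q.coeff K * K = - E.coeff K) ∧
      (2 ≤ K → Q.coeff (K-1) * (K-1) = - E.coeff (K-1) - E.coeff K * c) ∧
      (∀ ζ : ℂ, ζ ≠ 0 → aeval ((c:ℂ) + h * (ζ + ζ⁻¹)) Q = aeval ζ b + aeval ζ⁻¹ b) ∧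
      (∀ ζ : ℂ, ζ ≠ 0 → aeval ((c:ℂ) + h * (ζ + ζ⁻¹)) E =
        - N - ζ * aeval ζ (derivative b) - ζ⁻¹ * aeval ζ⁻¹ (derivative b)) := by
  induction K with
  | zero =>
    intro E hE
    rw [eq_C_of_natDegree_le_zero hE]
    exact ⟨-E.coeff 0, 0, 0, by simp, by simp, by simp, by simp, by simp⟩
  | succ K ih =>
    intro E hE
    obtain ⟨d1, d2, d3⟩ := Dk_deg c h (K+1)
    have d2 := d2 (by omega)
    have d3 := d3 (by omega)
    rw [show K+1-1 = K by omega] at d3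
    set e := E.coeff (K+1) with he
    have hE' : (E - C e * Dk c h (K+1)).natDegree ≤ K := by
      rw [natDegree_le_iff_coeff_eq_zero]
      intro m hm
      rcases (show m = K+1 ∨ K+1 < m by omega) with rfl | hm'
      · simp [d2, ← he]
      · rw [coeff_sub, coeff_C_mul, coeff_eq_zero_of_natDegree_lt (by omega : E.natDegree < m),
          coeff_eq_zero_of_natDegree_lt (by omega : (Dk c h (K+1)).natDegree < m)]
        simp
    obtain ⟨N, Q, b, q1, q2, q3, q4, q5⟩ := ih _ hE'
    have hK : ((K:ℝ)+1) ≠ 0 := by positivity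
    obtain ⟨g, hg⟩ : ∃ g : ℝ, g = e/(K+1) * h^(K+1) := ⟨_, rfl⟩
    refine ⟨N, Q - C (e/(K+1)) * Dk c h (K+1), b - C g * X^(K+1), ?_, ?_, ?_, ?_, ?_⟩
    · refine (natDegree_sub_le _ _).trans (max_le (by omega) ?_)
      exact natDegree_mul_le.trans (by rw [natDegree_C]; omega)
    · intro _
      rw [coeff_sub, coeff_C_mul, d2, coeff_eq_zero_of_natDegree_lt (by omega : Q.natDegree < K+1)]
      push_cast
      field_simp
      ring
    · intro hK2
      have := q2 (by omega)
      rw [coeff_sub, coeff_C_mul, d3] at this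
      rw [show K+1-1 = K by omega, coeff_sub, coeff_C_mul, d3]
      push_cast at this ⊢
      field_simp
      linear_combination this
    · intro ζ hζ
      simp only [map_sub, map_mul, aeval_C, q4 ζ hζ, Dk_eval c h ζ hζ, map_pow, aeval_X,
        coe_algebraMap, hg]
      push_cast; ring
    · intro ζ hζ
      have := q5 ζ hζ
      simp only [map_sub, map_mul, aeval_C, Dk_eval c h ζ hζ, coe_algebraMap] at this
      simp only [derivative_sub, derivative_C_mul, derivative_X_pow, map_sub, map_mul, aeval_C,
        map_pow, aeval_X, coe_algebraMap, map_natCast, Nat.add_sub_cancel]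
      have hK' : ((K:ℂ)+1) ≠ 0 := by exact_mod_cast hK
      have e1 : (g : ℂ) * (K+1) = e * h^(K+1) := by
        rw [hg]; push_cast; field_simp
      push_cast at e1 ⊢
      linear_combination this + - (ζ^(K+1) + ζ⁻¹^(K+1)) * e1

noncomputable def J (ρ : ℝ) (ζ : ℂ) : ℂ := ((ρ^2 : ℝ) : ℂ) + (((ρ^2-1)/2 : ℝ) : ℂ) * (ζ + ζ⁻¹)

lemma inv_of_circle {ζ : ℂ} (h : ‖ζ‖ = 1) : ζ⁻¹ = (starRingEnd ℂ) ζ := by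
  rw [Complex.inv_def, Complex.normSq_eq_norm_sq, h]; simp

lemma J_circle (ρ : ℝ) {ζ : ℂ} (h : ‖ζ‖ = 1) : J ρ ζ = ((ρ^2 + (ρ^2-1) * ζ.re : ℝ) : ℂ) := by
  rw [J, inv_of_circle h, Complex.add_conj]; push_cast; ring

lemma aeval_conj_real (b : ℝ[X]) (ζ : ℂ) :
    aeval ((starRingEnd ℂ) ζ) b = (starRingEnd ℂ) (aeval ζ b) := by
  rw [Polynomial.aeval_conj]

lemma abs_re_le_one {ζ : ℂ} (h : ‖ζ‖ = 1) : -1 ≤ ζ.re ∧ ζ.re ≤ 1 := by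
  have := Complex.abs_re_le_norm ζ
  rw [h] at this
  exact abs_le.mp this

structure Pot (n : ℕ) (ρ κ : ℝ) (N : ℕ) (Q b : ℝ[X]) : Prop where
  hn : 1 ≤ n
  hρ : 10 ≤ ρ
  hκ : 0 < κ
  hN : 1 ≤ N
  deg : Q.natDegree ≤ n + 1
  top : Q.coeff (n+1) * (n+1) = - (κ / ρ)
  sub : Q.coeff n * n = κ * ρ
  hQ : ∀ ζ : ℂ, ζ ≠ 0 → aeval (J ρ ζ) Q = aeval ζ b + aeval ζ⁻¹ b
  hE : ∀ ζ : ℂ, ζ ≠ 0 → ((κ/ρ : ℝ) : ℂ) * (J ρ ζ)^(n-1) * (J ρ ζ - 1) * (J ρ ζ - (2*ρ^2-1)) =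
        - N - ζ * aeval ζ (derivative b) - ζ⁻¹ * aeval ζ⁻¹ (derivative b)

set_option maxHeartbeats 1600000 in
lemma exists_pot (n : ℕ) (hn : 1 ≤ n) (κ₀ : ℝ) (hκ₀ : 1 ≤ κ₀) (ρ : ℝ) (hρ : 10 ≤ ρ) :
    ∃ κ N Q b, κ₀ ≤ κ ∧ κ ≤ 2 * κ₀ ∧ Pot n ρ κ N Q b := by
  have hρ0 : 0 < ρ := by linarith
  let E : ℝ[X] := C (1/ρ) * (X^(n+1) - C (2*ρ^2) * X^n + C (2*ρ^2-1) * X^(n-1))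
  have hEd : E.natDegree ≤ n+1 := by
    refine natDegree_C_mul_le _ _ |>.trans ?_
    compute_degree
    omega
  have hE1 : E.coeff (n+1) = 1/ρ := by
    have : ¬ (n + 1 = n - 1) := by omega
    simp only [E, coeff_C_mul, coeff_sub, coeff_add, coeff_X_pow]
    rw [if_pos trivial, if_neg (by omega), if_neg (by omega)]; ring
  have hE2 : E.coeff n = - (2 * ρ) := by
    have : ¬ (n = n - 1) := by omega
    simp only [E, coeff_C_mul, coeff_sub, coeff_add, coeff_X_pow]
    rw [if_neg (by omega), if_pos trivial, if_neg (by omega)]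
    field_simp; ring
  have hEe : ∀ z : ℂ, aeval z E = ((1/ρ:ℝ):ℂ) * z^(n-1) * (z - 1) * (z - (2*ρ^2-1)) := by
    intro z
    obtain ⟨k, rfl⟩ : ∃ k, n = k + 1 := ⟨n-1, by omega⟩
    simp only [E, map_mul, map_add, map_sub, aeval_C, map_pow, aeval_X, Nat.add_sub_cancel,
      coe_algebraMap]
    push_cast; ring
  obtain ⟨N₁, Q, b, q1, q2, q3, q4, q5⟩ := exists_Qb (ρ^2) ((ρ^2-1)/2) (n+1) E hEd
  have q2 := q2 (by omega)
  have q3 := q3 (by omega)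
  rw [Nat.add_sub_cancel, hE1, hE2] at q3
  rw [hE1] at q2
  push_cast at q2 q3
  -- lower bound for N₁
  have hN₁ : (ρ^2-1)^2/(2*ρ) ≤ N₁ := by
    set s : ℝ := ((ρ^2-1)/2)^2/ρ with hs
    have key : ∀ ζ : ℂ, ‖ζ‖ = 1 → (-2 * ζ * aeval ζ (derivative b) - N₁ - s * (2 * ζ^2 - 2)).re ≤ 0 := by
      intro ζ hζ
      have hζ0 : ζ ≠ 0 := by rintro rfl; simp at hζ
      have h5 := q5 ζ hζ0
      change aeval (J ρ ζ) E = _ at h5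
      rw [hEe, J_circle ρ hζ, inv_of_circle hζ, aeval_conj_real] at h5
      have h6 := congrArg Complex.re h5
      set t : ℝ := ρ^2 + (ρ^2-1) * ζ.re with ht
      have e1 : ((1/ρ:ℝ):ℂ) * (t:ℂ)^(n-1) * ((t:ℂ) - 1) * (t - (2*ρ^2-1)) =
        (((1/ρ) * t^(n-1) * (t-1) * (t-(2*ρ^2-1)) : ℝ) : ℂ) := by push_cast; ring
      rw [e1, Complex.ofReal_re] at h6
      simp only [sub_re, neg_re, ofReal_re, mul_re, conj_re, conj_im] at h6
      have hn1 : ζ.re^2 + ζ.im^2 = 1 := by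
        have := Complex.sq_norm ζ
        rw [hζ, Complex.normSq_apply] at this; nlinarith
      obtain ⟨r1, r2⟩ := abs_re_le_one hζ
      have hρ2 : 1 ≤ ρ^2 := by nlinarith
      have ht1 : 1 ≤ t := by rw [ht]; nlinarith
      have htn : 1 ≤ t^(n-1) := one_le_pow₀ ht1
      have hprod : (t-1)*(t-(2*ρ^2-1)) = -(ρ^2-1)^2 * (1 - ζ.re^2) := by rw [ht]; ring
      have hle : (1/ρ) * t^(n-1) * (t-1) * (t-(2*ρ^2-1)) ≤ (1/ρ) * ((t-1)*(t-(2*ρ^2-1))) := by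
        have h1 : (1/ρ) * t^(n-1) * (t-1) * (t-(2*ρ^2-1)) = (1/ρ) * (t^(n-1) * ((t-1) * (t-(2*ρ^2-1)))) := by ring
        rw [h1]
        apply mul_le_mul_of_nonneg_left _ (by positivity)
        have : (t-1)*(t-(2*ρ^2-1)) ≤ 0 := by
          rw [hprod]; nlinarith [mul_nonneg (sq_nonneg (ρ^2-1)) (show 0 ≤ 1 - ζ.re^2 by nlinarith [sq_nonneg ζ.im])]
        nlinarith
      have hs2 : (1/ρ) * ((t-1)*(t-(2*ρ^2-1))) = s * (2 * (ζ.re^2 - ζ.im^2) - 2) := by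
        rw [hprod, hs, show ζ.im^2 = 1 - ζ.re^2 by linarith]; field_simp; ring
      simp only [sub_re, mul_re, neg_re, ofReal_re, ofReal_im, pow_two, re_ofNat, im_ofNat, neg_im, mul_im]
      linarith [h6, hle, hs2]
    have hd : DiffContOnCl ℂ (fun ζ : ℂ => Complex.exp (-2 * ζ * aeval ζ (derivative b) - N₁ - s * (2 * ζ^2 - 2)))
        (Metric.ball 0 1) := by
      apply Differentiable.diffContOnCl
      have := Polynomial.differentiable_aeval (𝕜 := ℂ) (derivative b)
      fun_prop
    have := Complex.norm_le_of_forall_mem_frontier_norm_le (C := 1) Metric.isBounded_ball hd (by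
      intro ζ hζ
      rw [frontier_ball _ one_ne_zero, mem_sphere_zero_iff_norm] at hζ
      rw [Complex.norm_exp]
      exact Real.exp_le_one_iff.mpr (key ζ hζ)) (z := 0) (subset_closure (by simp))
    rw [Complex.norm_exp, Real.exp_le_one_iff] at this
    simp at this
    have e : (ρ^2-1)^2/(2*ρ) = s * 2 := by rw [hs]; field_simp
    rw [e]; linarith
  have hN₁' : 1 ≤ N₁ := by
    refine le_trans ?_ hN₁
    rw [le_div_iff₀ (by positivity)]
    nlinarith [mul_nonneg (sub_nonneg.mpr hρ) (sub_nonneg.mpr hρ)]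
  set N : ℕ := ⌈κ₀ * N₁⌉₊ with hNdef
  have hN1 : κ₀ * N₁ ≤ N := Nat.le_ceil _
  have hN2 : (N:ℝ) < κ₀ * N₁ + 1 := Nat.ceil_lt_add_one (by positivity)
  have hκN : 1 ≤ κ₀ * N₁ := by nlinarith
  have hN₁0 : 0 < N₁ := by linarith
  set κ : ℝ := N / N₁ with hκ
  have hκ1 : κ₀ ≤ κ := by rw [hκ, le_div_iff₀ hN₁0]; exact hN1
  have hκ2 : κ ≤ 2 * κ₀ := by rw [hκ, div_le_iff₀ hN₁0]; linarith
  refine ⟨κ, N, C κ * Q, C κ * b, hκ1, hκ2, hn, hρ, by linarith, ?_, ?_, ?_, ?_, ?_, ?_⟩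
  · have : (1:ℝ) ≤ N := by linarith
    exact_mod_cast this
  · exact (natDegree_C_mul_le _ _).trans q1
  · rw [coeff_C_mul]; linear_combination κ * q2
  · rw [coeff_C_mul]
    have : ρ⁻¹ * ρ = 1 := inv_mul_cancel₀ hρ0.ne'
    simp only [one_div] at q3
    linear_combination κ * q3 - κ * ρ * this
  · intro ζ hζ
    have := q4 ζ hζ
    change aeval (J ρ ζ) Q = _ at this
    simp only [map_mul, aeval_C, this]; ring
  · intro ζ hζ
    have := q5 ζ hζ
    change aeval (J ρ ζ) E = _ at this
    rw [hEe] at this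
    simp only [derivative_C_mul, map_mul, aeval_C, coe_algebraMap]
    have e : ((N:ℕ):ℂ) = (κ:ℂ) * N₁ := by
      have : (N:ℝ) = κ * N₁ := by rw [hκ]; field_simp
      exact_mod_cast this
    rw [e]
    push_cast at this ⊢
    linear_combination (κ:ℂ) * this

end Part1

section Part2
noncomputable def phi (N : ℕ) (b : ℝ[X]) (ζ : ℂ) : ℝ :=
  (aeval ζ⁻¹ b - aeval ζ b).re - N * Real.log ‖ζ‖

lemma phi_circle (N : ℕ) (b : ℝ[X]) {ζ : ℂ} (h : ‖ζ‖ = 1) : phi N b ζ = 0 := by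
  rw [phi, inv_of_circle h, aeval_conj_real, h]; simp

lemma phi_conj (N : ℕ) (b : ℝ[X]) (ζ : ℂ) : phi N b ((starRingEnd ℂ) ζ) = phi N b ζ := by
  rw [phi, phi, ← map_inv₀, aeval_conj_real, aeval_conj_real]; simp

lemma J_conj (ρ : ℝ) (ζ : ℂ) : J ρ ((starRingEnd ℂ) ζ) = (starRingEnd ℂ) (J ρ ζ) := by
  simp only [J, map_add, map_mul, conj_ofReal, map_inv₀]

lemma phi_unique (N : ℕ) (b : ℝ[X]) {ρ : ℝ} (hρ : 10 ≤ ρ) {ζ ζ' : ℂ} (h0 : ζ ≠ 0) (h0' : ζ' ≠ 0)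
    (h1 : ‖ζ‖ ≤ 1) (h1' : ‖ζ'‖ ≤ 1) (hJ : J ρ ζ = J ρ ζ') : phi N b ζ = phi N b ζ' := by
  have hh : (((ρ^2-1)/2 : ℝ) : ℂ) ≠ 0 := by
    have : (ρ^2-1)/2 ≠ 0 := by nlinarith
    exact_mod_cast this
  have e : ζ + ζ⁻¹ = ζ' + ζ'⁻¹ := by
    simp only [J] at hJ
    exact mul_left_cancel₀ hh (add_left_cancel hJ)
  have : (ζ - ζ') * (ζ * ζ' - 1) = 0 := by
    field_simp at e
    linear_combination e
  rcases mul_eq_zero.mp this with h | h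
  · rw [sub_eq_zero.mp h]
  · have hn : ‖ζ‖ * ‖ζ'‖ = 1 := by rw [← norm_mul, sub_eq_zero.mp h]; simp
    have a : ‖ζ‖ = 1 := by nlinarith [norm_nonneg ζ, norm_nonneg ζ']
    have a' : ‖ζ'‖ = 1 := by nlinarith [norm_nonneg ζ, norm_nonneg ζ']
    rw [phi_circle N b a, phi_circle N b a']

lemma J_im (ρ : ℝ) (ζ : ℂ) : (J ρ ζ).im = (ρ^2-1)/2 * (ζ.im - ζ.im / normSq ζ) := by
  rw [J, add_im, ofReal_im, im_ofReal_mul, add_im, inv_im]; ring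

/-! square root on the upper half plane -/
noncomputable def csq (z : ℂ) : ℂ := z ^ (1/2 : ℂ)

lemma csq_sq (z : ℂ) : csq z ^ 2 = z := by
  rw [csq, one_div]; exact Complex.cpow_nat_inv_pow z (n := 2) (by norm_num)

lemma csq_re (z : ℂ) : 0 ≤ (csq z).re := by
  rcases eq_or_ne z 0 with rfl | hz
  · simp [csq]
  rw [csq, Complex.cpow_def_of_ne_zero hz, Complex.exp_re]
  apply mul_nonneg (Real.exp_pos _).le
  have : (log z * (1/2)).im = arg z / 2 := by
    rw [show (1/2:ℂ) = ((1/2:ℝ):ℂ) by push_cast; rfl, im_mul_ofReal, log_im]; ring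
  rw [this]
  apply Real.cos_nonneg_of_neg_pi_div_two_le_of_le
  · linarith [neg_pi_lt_arg z]
  · linarith [arg_le_pi z]

lemma csq_im {z : ℂ} (h : 0 ≤ z.im) : 0 ≤ (csq z).im := by
  rcases eq_or_ne z 0 with rfl | hz
  · simp [csq]
  rw [csq, Complex.cpow_def_of_ne_zero hz, Complex.exp_im]
  apply mul_nonneg (Real.exp_pos _).le
  have : (log z * (1/2)).im = arg z / 2 := by
    rw [show (1/2:ℂ) = ((1/2:ℝ):ℂ) by push_cast; rfl, im_mul_ofReal, log_im]; ring
  rw [this]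
  apply Real.sin_nonneg_of_nonneg_of_le_pi
  · linarith [arg_nonneg_iff.mpr h]
  · linarith [arg_le_pi z, Real.pi_pos]

lemma csq_holder {z z' : ℂ} (h : 0 ≤ z.im) (h' : 0 ≤ z'.im) : ‖csq z - csq z'‖^2 ≤ ‖z - z'‖ := by
  have e : z - z' = (csq z - csq z') * (csq z + csq z') := by
    rw [← csq_sq z, ← csq_sq z']; rw [csq_sq, csq_sq]; linear_combination (csq_sq z') - (csq_sq z)
  have : ‖csq z - csq z'‖ ≤ ‖csq z + csq z'‖ := by
    apply le_of_sq_le_sq _ (norm_nonneg _)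
    rw [Complex.sq_norm, Complex.sq_norm, normSq_apply, normSq_apply]
    simp only [sub_re, sub_im, add_re, add_im]
    nlinarith [mul_nonneg (csq_re z) (csq_re z'), mul_nonneg (csq_im h) (csq_im h')]
  rw [e, norm_mul, pow_two]
  exact mul_le_mul_of_nonneg_left this (norm_nonneg _)

lemma csq_tendsto {z : ℂ} (h : 0 ≤ z.im) :
    Filter.Tendsto (fun η : ℝ => csq (z + η * I)) (nhdsWithin 0 (Set.Ioi 0)) (nhds (csq z)) := by
  rw [tendsto_iff_norm_sub_tendsto_zero]
  have h1 : Filter.Tendsto (fun η : ℝ => Real.sqrt η) (nhdsWithin 0 (Set.Ioi 0)) (nhds 0) := by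
    have := (Real.continuous_sqrt.tendsto 0)
    rw [Real.sqrt_zero] at this
    exact this.mono_left nhdsWithin_le_nhds
  refine squeeze_zero' (Filter.Eventually.of_forall fun _ => norm_nonneg _) ?_ h1
  filter_upwards [self_mem_nhdsWithin] with η hη
  have hη : 0 < η := hη
  apply Real.le_sqrt_of_sq_le
  refine (csq_holder (by simp; linarith) h).trans ?_
  simp [abs_of_pos hη]

lemma csq_hasDerivAt {z : ℂ} (h : 0 < z.im) : HasDerivAt csq (1 / (2 * csq z)) z := by
  have hz : z ∈ slitPlane := by right; exact h.ne'
  have h0 : z ≠ 0 := slitPlane_ne_zero hz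
  have := (hasDerivAt_id z).cpow_const (c := (1/2:ℂ)) hz
  refine this.congr_deriv ?_
  have hs := csq_sq z
  have hs0 : csq z ≠ 0 := by intro h; rw [h] at hs; simp at hs; exact h0 hs.symm
  rw [id, cpow_sub _ _ h0, cpow_one]
  change 1/2 * (csq z / z) * 1 = _
  field_simp
  linear_combination hs

noncomputable def ss (ρ : ℝ) (z : ℂ) : ℂ := csq (z - 1) * csq (z - ((2*ρ^2-1 : ℝ) : ℂ))
noncomputable def zt (ρ : ℝ) (z : ℂ) : ℂ := (z - ((ρ^2 : ℝ):ℂ) - ss ρ z) / ((ρ^2-1 : ℝ) : ℂ)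

lemma ss_sq (ρ : ℝ) (z : ℂ) : ss ρ z ^ 2 = (z-1) * (z - ((2*ρ^2-1 : ℝ) : ℂ)) := by
  rw [ss, mul_pow, csq_sq, csq_sq]

lemma del_ne {ρ : ℝ} (hρ : 10 ≤ ρ) : ((ρ^2-1 : ℝ) : ℂ) ≠ 0 := by
  have : (ρ^2-1) ≠ 0 := by nlinarith
  exact_mod_cast this

lemma zt_mul {ρ : ℝ} (hρ : 10 ≤ ρ) (z : ℂ) :
    zt ρ z * ((z - ((ρ^2 : ℝ):ℂ) + ss ρ z) / ((ρ^2-1 : ℝ) : ℂ)) = 1 := by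
  rw [zt]
  have := del_ne hρ
  have h2 := ss_sq ρ z
  field_simp
  push_cast at *
  linear_combination -h2

lemma zt_ne {ρ : ℝ} (hρ : 10 ≤ ρ) (z : ℂ) : zt ρ z ≠ 0 := left_ne_zero_of_mul_eq_one (zt_mul hρ z)

lemma zt_inv {ρ : ℝ} (hρ : 10 ≤ ρ) (z : ℂ) :
    (zt ρ z)⁻¹ = (z - ((ρ^2 : ℝ):ℂ) + ss ρ z) / ((ρ^2-1 : ℝ) : ℂ) :=
  inv_eq_of_mul_eq_one_right (zt_mul hρ z)

lemma J_zt {ρ : ℝ} (hρ : 10 ≤ ρ) (z : ℂ) : J ρ (zt ρ z) = z := by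
  rw [J, zt_inv hρ, zt]
  have := del_ne hρ
  push_cast at *
  field_simp
  ring

lemma zt_norm {ρ : ℝ} (hρ : 10 ≤ ρ) {z : ℂ} (h : 0 ≤ z.im) : ‖zt ρ z‖ ≤ 1 := by
  have h1 := congrArg norm (zt_mul hρ z)
  rw [norm_mul, norm_one] at h1
  have h2 : ‖zt ρ z‖ ≤ ‖((z - ((ρ^2 : ℝ):ℂ) + ss ρ z) / ((ρ^2-1 : ℝ) : ℂ))‖ := by
    rw [zt, norm_div, norm_div]
    apply div_le_div_of_nonneg_right _ (norm_nonneg _)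
    apply le_of_sq_le_sq _ (norm_nonneg _)
    set a := csq (z-1) with ha
    set c := csq (z - ((2*ρ^2-1 : ℝ) : ℂ)) with hc
    have e : z - ((ρ^2:ℝ):ℂ) = (a^2 + c^2)/2 := by
      rw [ha, hc, csq_sq, csq_sq]; push_cast; ring
    have hss : ss ρ z = a * c := rfl
    have r1 := csq_re (z-1)
    have r2 := csq_re (z - ((2*ρ^2-1 : ℝ) : ℂ))
    have i1 : 0 ≤ (csq (z-1)).im := csq_im (by simpa using h)
    have i2 : 0 ≤ (csq (z - ((2*ρ^2-1 : ℝ) : ℂ))).im := csq_im (by rw [sub_im, ofReal_im]; simpa using h)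
    rw [← ha] at r1 i1
    rw [← hc] at r2 i2
    rw [e, hss]
    have e1 : (a^2+c^2)/2 - a*c = (a-c)^2/2 := by ring
    have e2 : (a^2+c^2)/2 + a*c = (a+c)^2/2 := by ring
    rw [e1, e2, norm_div, norm_div, norm_pow, norm_pow]
    have : ‖a - c‖^2 ≤ ‖a + c‖^2 := by
      rw [Complex.sq_norm, Complex.sq_norm, normSq_apply, normSq_apply]
      simp only [sub_re, sub_im, add_re, add_im]
      nlinarith [mul_nonneg r1 r2, mul_nonneg i1 i2]
    gcongr
  nlinarith [norm_nonneg (zt ρ z)]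

lemma exists_zeta {ρ : ℝ} (hρ : 10 ≤ ρ) (z : ℂ) : ∃ ζ : ℂ, ζ ≠ 0 ∧ ‖ζ‖ ≤ 1 ∧ J ρ ζ = z := by
  rcases le_total 0 z.im with h | h
  · exact ⟨zt ρ z, zt_ne hρ z, zt_norm hρ h, J_zt hρ z⟩
  · refine ⟨(starRingEnd ℂ) (zt ρ ((starRingEnd ℂ) z)), ?_, ?_, ?_⟩
    · simpa using zt_ne hρ _
    · rw [Complex.norm_conj]; exact zt_norm hρ (by simpa using h)
    · rw [J_conj, J_zt hρ]; simp

end Part2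

section Part3
lemma ss_hasDerivAt {ρ : ℝ} {z : ℂ} (h : 0 < z.im) :
    HasDerivAt (ss ρ) ((z - ((ρ^2:ℝ):ℂ)) / ss ρ z) z := by
  have i1 : 0 < (z - 1).im := by simpa using h
  have i2 : 0 < (z - ((2*ρ^2-1 : ℝ) : ℂ)).im := by rw [sub_im, ofReal_im]; simpa using h
  have d1 := (csq_hasDerivAt i1).comp z ((hasDerivAt_id z).sub_const 1)
  have d2 := (csq_hasDerivAt i2).comp z ((hasDerivAt_id z).sub_const ((2*ρ^2-1 : ℝ) : ℂ))
  refine (d1.mul d2).congr_deriv ?_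
  have s1 := csq_sq (z-1)
  have s2 := csq_sq (z - ((2*ρ^2-1 : ℝ) : ℂ))
  have n1 : csq (z-1) ≠ 0 := by
    intro h; rw [h] at s1; rw [← s1] at i1; simp at i1
  have n2 : csq (z - ((2*ρ^2-1 : ℝ) : ℂ)) ≠ 0 := by
    intro h; rw [h] at s2; rw [← s2] at i2; simp at i2
  simp only [ss, Function.comp, id]
  set a := csq (z-1)
  set c := csq (z - ((2*ρ^2-1 : ℝ) : ℂ))
  field_simp
  push_cast at *
  linear_combination s1 + s2

lemma ss_ne {ρ : ℝ} {z : ℂ} (h : 0 < z.im) : ss ρ z ≠ 0 := by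
  intro h0
  have h2 := ss_sq ρ z
  rw [h0] at h2
  have i1 : 0 < (z - 1).im := by simpa using h
  have i2 : 0 < (z - ((2*ρ^2-1 : ℝ) : ℂ)).im := by rw [sub_im, ofReal_im]; simpa using h
  have := h2.symm
  simp only [ne_eq, OfNat.ofNat_ne_zero, not_false_eq_true, zero_pow, mul_eq_zero] at this
  rcases this with h | h
  · rw [h] at i1; simp at i1
  · rw [h] at i2; simp at i2

lemma zt_hasDerivAt {ρ : ℝ} {z : ℂ} (h : 0 < z.im) :
    HasDerivAt (zt ρ) (- zt ρ z / ss ρ z) z := by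
  refine ((((hasDerivAt_id z).sub_const ((ρ^2:ℝ):ℂ)).sub (ss_hasDerivAt h)).div_const
    ((ρ^2-1 : ℝ) : ℂ)).congr_deriv ?_
  have := ss_ne (ρ := ρ) h
  rw [zt]
  field_simp
  ring

/-- the complex potential on the upper half plane -/
noncomputable def Ph (N : ℕ) (b : ℝ[X]) (ρ : ℝ) (z : ℂ) : ℂ :=
  aeval (zt ρ z)⁻¹ b - aeval (zt ρ z) b - N * log (zt ρ z)

lemma Ph_re (N : ℕ) (b : ℝ[X]) (ρ : ℝ) (z : ℂ) : (Ph N b ρ z).re = phi N b (zt ρ z) := by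
  simp [Ph, phi, Complex.log_re]

lemma aeval_hasDerivAt (b : ℝ[X]) (x : ℂ) :
    HasDerivAt (fun x : ℂ => aeval x b) (aeval x (derivative b)) x := by
  have := Polynomial.hasDerivAt_aeval b x
  exact this

variable {n : ℕ} {ρ κ : ℝ} {N : ℕ} {Q b : ℝ[X]}

lemma Ph_hasDerivAt (hP : Pot n ρ κ N Q b) {z : ℂ} (h : 0 < z.im) :
    HasDerivAt (Ph N b ρ) (-((κ/ρ:ℝ):ℂ) * z^(n-1) * ss ρ z) z := by
  have hρ := hP.hρ
  have hz0 := zt_ne hρ z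
  have hsl : zt ρ z ∈ slitPlane := by
    right
    intro h0
    have := J_im ρ (zt ρ z)
    rw [J_zt hρ, h0] at this
    simp at this
    exact h.ne' this
  have hd := zt_hasDerivAt (ρ := ρ) h
  have d1 := (aeval_hasDerivAt b (zt ρ z)⁻¹).comp z (hd.inv hz0)
  have d2 := (aeval_hasDerivAt b (zt ρ z)).comp z hd
  have d3 := (hd.clog hsl).const_mul (N:ℂ)
  refine ((d1.sub d2).sub d3).congr_deriv ?_
  have hE := hP.hE _ hz0
  rw [J_zt hρ] at hE
  have hs := ss_ne (ρ := ρ) h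
  have h2 := ss_sq ρ z
  have e : (zt ρ z) * (zt ρ z)⁻¹ = 1 := mul_inv_cancel₀ hz0
  field_simp
  field_simp at hE
  push_cast at *
  rw [h2]
  linear_combination hE

lemma ss_norm (hρ : 10 ≤ ρ) {z : ℂ} {K : ℝ} (hK : ‖z‖ ≤ K) (hK0 : 0 ≤ K) : ‖ss ρ z‖ ≤ ρ * (K+2) := by
  have h2 := congrArg norm (ss_sq ρ z)
  rw [norm_pow, norm_mul] at h2
  have a1 : ‖z - 1‖ ≤ K + 1 := by
    refine (norm_sub_le _ _).trans ?_
    simpa using hK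
  have a2 : ‖z - ((2*ρ^2-1:ℝ):ℂ)‖ ≤ K + 2*ρ^2 := by
    refine (norm_sub_le _ _).trans ?_
    rw [Complex.norm_real, Real.norm_eq_abs, abs_of_nonneg (by nlinarith)]
    linarith
  apply le_of_sq_le_sq _ (by positivity)
  rw [h2]
  calc _ ≤ (K+1)*(K+2*ρ^2) := by gcongr
    _ ≤ (ρ*(K+2))^2 := by nlinarith [mul_nonneg hK0 hK0, mul_nonneg (mul_nonneg hK0 hK0) (show 0 ≤ ρ^2 - 1 by nlinarith), mul_nonneg hK0 (show 0 ≤ ρ^2 - 1 by nlinarith)]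

lemma Ph_lip (hP : Pot n ρ κ N Q b) {K : ℝ} (hK : 0 ≤ K) {z z' : ℂ} (h : 0 < z.im) (h' : 0 < z'.im)
    (hz : ‖z‖ ≤ K) (hz' : ‖z'‖ ≤ K) : ‖Ph N b ρ z - Ph N b ρ z'‖ ≤ κ * (K+2)^n * ‖z - z'‖ := by
  have hκ := hP.hκ
  have hρ := hP.hρ
  have hn := hP.hn
  have hconv : Convex ℝ ({z : ℂ | 0 < z.im} ∩ Metric.closedBall 0 K) :=
    (convex_halfSpace_im_gt 0).inter (convex_closedBall 0 K)
  refine hconv.norm_image_sub_le_of_norm_hasDerivWithin_le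
    (f' := fun z => -((κ/ρ:ℝ):ℂ) * z^(n-1) * ss ρ z) ?_ ?_ ⟨h', by simpa using hz'⟩ ⟨h, by simpa using hz⟩
  · intro x hx
    exact (Ph_hasDerivAt hP hx.1).hasDerivWithinAt
  · intro x hx
    have hx2 : ‖x‖ ≤ K := by simpa using hx.2
    rw [norm_mul, norm_mul, norm_neg, Complex.norm_real, norm_pow, Real.norm_eq_abs,
      abs_of_pos (by positivity)]
    have := ss_norm hρ hx2 hK
    calc _ ≤ κ/ρ * (K+2)^(n-1) * (ρ * (K+2)) := by gcongr; linarith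
      _ = κ * ((K+2)^(n-1) * (K+2)) := by field_simp
      _ = _ := by rw [← pow_succ, Nat.sub_add_cancel hn]

lemma phi_zt_tendsto (hρ : 10 ≤ ρ) {z : ℂ} (h : 0 ≤ z.im) :
    Filter.Tendsto (fun η : ℝ => phi N b (zt ρ (z + η * I))) (nhdsWithin 0 (Set.Ioi 0))
      (nhds (phi N b (zt ρ z))) := by
  have h0 : Filter.Tendsto (fun η : ℝ => z + η * I) (nhdsWithin 0 (Set.Ioi 0)) (nhds z) := by
    have : Continuous (fun η : ℝ => z + η * I) := by fun_prop
    have := this.tendsto 0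
    simp only [ofReal_zero, zero_mul, add_zero] at this
    exact this.mono_left nhdsWithin_le_nhds
  have hs : Filter.Tendsto (fun η : ℝ => ss ρ (z + η * I)) (nhdsWithin 0 (Set.Ioi 0)) (nhds (ss ρ z)) := by
    have t1 := csq_tendsto (z := z - 1) (by simpa using h)
    have t2 := csq_tendsto (z := z - ((2*ρ^2-1:ℝ):ℂ)) (by rw [sub_im, ofReal_im]; simpa using h)
    refine (t1.mul t2).congr fun η => ?_
    rw [ss]; congr 2 <;> ring
  have hz : Filter.Tendsto (fun η : ℝ => zt ρ (z + η * I)) (nhdsWithin 0 (Set.Ioi 0)) (nhds (zt ρ z)) :=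
    ((h0.sub_const _).sub hs).div_const _
  have hne := zt_ne hρ z
  have hc : ContinuousAt (phi N b) (zt ρ z) := by
    unfold phi
    have c1 : ContinuousAt (fun x : ℂ => aeval x⁻¹ b) (zt ρ z) :=
      ContinuousAt.comp (f := fun x : ℂ => x⁻¹) (g := fun x : ℂ => aeval x b)
        (aeval_hasDerivAt b _).continuousAt (continuousAt_inv₀ hne)
    have c2 : ContinuousAt (fun x : ℂ => aeval x b) (zt ρ z) := (aeval_hasDerivAt b _).continuousAt
    have c3 : ContinuousAt (fun x : ℂ => Real.log ‖x‖) (zt ρ z) :=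
      ContinuousAt.log continuous_norm.continuousAt (norm_ne_zero_iff.mpr hne)
    exact (Complex.continuous_re.continuousAt.comp (c1.sub c2)).sub (continuousAt_const.mul c3)
  exact hc.tendsto.comp hz

lemma phi_zt_lip (hP : Pot n ρ κ N Q b) {K : ℝ} (hK : 0 ≤ K) {z z' : ℂ} (h : 0 ≤ z.im) (h' : 0 ≤ z'.im)
    (hz : ‖z‖ ≤ K) (hz' : ‖z'‖ ≤ K) :
    |phi N b (zt ρ z) - phi N b (zt ρ z')| ≤ κ * (K+2)^n * ‖z - z'‖ := by
  have hκ := hP.hκ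
  have t := ((phi_zt_tendsto (N := N) (b := b) hP.hρ h).sub (phi_zt_tendsto (N := N) (b := b) hP.hρ h')).abs
  have t2 : Filter.Tendsto (fun η : ℝ => κ * ((K + η)+2)^n * ‖z - z'‖) (nhdsWithin 0 (Set.Ioi 0))
      (nhds (κ * (K+2)^n * ‖z - z'‖)) := by
    have : Continuous (fun η : ℝ => κ * ((K + η)+2)^n * ‖z - z'‖) := by fun_prop
    have := this.tendsto 0
    simp only [add_zero] at this
    exact this.mono_left nhdsWithin_le_nhds
  refine le_of_tendsto_of_tendsto t t2 ?_
  filter_upwards [self_mem_nhdsWithin] with η hη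
  have hη : 0 < η := hη
  rw [← Ph_re, ← Ph_re, ← sub_re]
  refine (abs_re_le_norm _).trans ?_
  have nI : ‖(η:ℂ) * I‖ = η := by simp [abs_of_pos hη]
  have := Ph_lip hP (K := K+η) (by linarith) (z := z + η * I) (z' := z' + η * I) (by simp; linarith)
    (by simp; linarith) ((norm_add_le _ _).trans (by rw [nI]; linarith))
    ((norm_add_le _ _).trans (by rw [nI]; linarith))
  simpa using this

/-- Lipschitz, with second point on closed upper half plane, general -/
lemma phi_lip (hP : Pot n ρ κ N Q b) {K : ℝ} {ζ ζ' : ℂ} (h0 : ζ ≠ 0) (h0' : ζ' ≠ 0)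
    (h1 : ‖ζ‖ ≤ 1) (h1' : ‖ζ'‖ ≤ 1) (him : (J ρ ζ').im = 0)
    (hz : ‖J ρ ζ‖ ≤ K) (hz' : ‖J ρ ζ'‖ ≤ K) :
    |phi N b ζ - phi N b ζ'| ≤ κ * (K+2)^n * ‖J ρ ζ - J ρ ζ'‖ := by
  have hρ := hP.hρ
  have hK : 0 ≤ K := (norm_nonneg _).trans hz
  have key : ∀ ζ : ℂ, ζ ≠ 0 → ‖ζ‖ ≤ 1 → ‖J ρ ζ‖ ≤ K → 0 ≤ (J ρ ζ).im →
    |phi N b ζ - phi N b ζ'| ≤ κ * (K+2)^n * ‖J ρ ζ - J ρ ζ'‖ := by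
    intro ζ h0 h1 hz hi
    rw [phi_unique N b hρ h0 (zt_ne hρ (J ρ ζ)) h1 (zt_norm hρ hi) (J_zt hρ _).symm,
      phi_unique N b hρ h0' (zt_ne hρ (J ρ ζ')) h1' (zt_norm hρ him.ge) (J_zt hρ _).symm]
    exact phi_zt_lip hP hK hi him.ge hz hz'
  rcases le_total 0 (J ρ ζ).im with hi | hi
  · exact key ζ h0 h1 hz hi
  · have := key ((starRingEnd ℂ) ζ) (by simpa using h0) (by rwa [Complex.norm_conj])
      (by rwa [J_conj, Complex.norm_conj]) (by rw [J_conj]; simpa using hi)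
    rw [phi_conj, J_conj] at this
    have e : J ρ ζ' = (starRingEnd ℂ) (J ρ ζ') := (Complex.conj_eq_iff_im.mpr him).symm
    rw [e, ← map_sub, Complex.norm_conj] at this
    exact this

end Part3

section Part4
variable {n : ℕ} {ρ κ : ℝ} {N : ℕ} {Q b : ℝ[X]}

noncomputable def psi (N : ℕ) (b : ℝ[X]) (σ : ℝ) : ℝ := b.eval σ⁻¹ - b.eval σ - N * Real.log σ

lemma aeval_real (b : ℝ[X]) (x : ℝ) : aeval (x:ℂ) b = ((b.eval x : ℝ) : ℂ) := by
  have := Polynomial.aeval_algebraMap_apply_eq_algebraMap_eval (A := ℂ) x b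
  simpa using this

lemma phi_psi (σ : ℝ) : phi N b (σ:ℂ) = psi N b σ := by
  rw [phi, psi, ← ofReal_inv, aeval_real, aeval_real, Complex.norm_real, Real.norm_eq_abs, Real.log_abs]
  simp

noncomputable def tt (ρ σ : ℝ) : ℝ := ρ^2 + (ρ^2-1)/2 * (σ + σ⁻¹)

lemma J_real (σ : ℝ) : J ρ (σ:ℂ) = ((tt ρ σ : ℝ):ℂ) := by rw [J, tt]; push_cast; ring

lemma hE_real (hP : Pot n ρ κ N Q b) {σ : ℝ} (h : σ ≠ 0) :
    (κ/ρ) * tt ρ σ^(n-1) * (((ρ^2-1)/2)^2 * (σ - σ⁻¹)^2) =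
      - N - σ * (derivative b).eval σ - σ⁻¹ * (derivative b).eval σ⁻¹ := by
  have := hP.hE σ (by exact_mod_cast h)
  rw [← ofReal_inv, aeval_real, aeval_real, J_real] at this
  have h2 : (κ/ρ) * tt ρ σ^(n-1) * (tt ρ σ - 1) * (tt ρ σ - (2*ρ^2-1)) =
      - N - σ * (derivative b).eval σ - σ⁻¹ * (derivative b).eval σ⁻¹ := by exact_mod_cast this
  rw [← h2]
  have e : (tt ρ σ - 1) * (tt ρ σ - (2*ρ^2-1)) = (((ρ^2-1)/2)^2 * (σ - σ⁻¹)^2) := by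
    rw [tt]; field_simp; ring
  rw [← e]; ring

lemma psi_hasDerivAt (hP : Pot n ρ κ N Q b) {σ : ℝ} (h : σ ≠ 0) :
    HasDerivAt (psi N b) ((κ/ρ) * tt ρ σ^(n-1) * (((ρ^2-1)/2)^2 * (σ - σ⁻¹)^2) / σ) σ := by
  have d1 := (b.hasDerivAt σ⁻¹).comp σ (hasDerivAt_inv h)
  have d2 := b.hasDerivAt σ
  have d3 := (Real.hasDerivAt_log h).const_mul (N:ℝ)
  refine ((d1.sub d2).sub d3).congr_deriv ?_
  rw [hE_real hP h]
  field_simp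
  ring

lemma tt_hasDerivAt {σ : ℝ} (h : σ ≠ 0) :
    HasDerivAt (tt ρ) ((ρ^2-1)/2 * (1 - (σ^2)⁻¹)) σ := by
  have := (((hasDerivAt_id σ).add (hasDerivAt_inv h)).const_mul ((ρ^2-1)/2)).const_add (ρ^2)
  refine this.congr_deriv ?_
  ring

lemma psi_pos (hP : Pot n ρ κ N Q b) {σ : ℝ} (h : 0 < σ) (h1 : σ ≤ 1) : psi N b σ ≤ 0 := by
  have hκ := hP.hκ
  have hρ := hP.hρ
  have hm : MonotoneOn (psi N b) (Set.Icc σ 1) := by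
    refine monotoneOn_of_hasDerivWithinAt_nonneg (f' := fun σ => (κ/ρ) * tt ρ σ^(n-1) * (((ρ^2-1)/2)^2 * (σ - σ⁻¹)^2) / σ)
      (convex_Icc _ _) ?_ ?_ ?_
    · intro x hx
      exact (psi_hasDerivAt hP (by linarith [hx.1] : (0:ℝ) < x).ne').continuousAt.continuousWithinAt
    · intro x hx
      rw [interior_Icc] at hx
      exact (psi_hasDerivAt hP (by linarith [hx.1] : (0:ℝ) < x).ne').hasDerivWithinAt
    · intro x hx
      rw [interior_Icc] at hx
      have hx0 : 0 < x := by linarith [hx.1]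
      have : 0 ≤ tt ρ x := by
        rw [tt]; have : 0 ≤ (ρ^2-1)/2 := by nlinarith
        positivity
      positivity
  have := hm (Set.left_mem_Icc.mpr h1) (Set.right_mem_Icc.mpr h1) h1
  simpa [psi] using this

noncomputable def gg (n : ℕ) (t : ℝ) : ℝ := t^n/n - t^(n+1)/(n+1)

lemma gg_hasDerivAt (hn : 1 ≤ n) (t : ℝ) : HasDerivAt (gg n) (t^(n-1)*(1-t)) t := by
  have d := ((hasDerivAt_pow n t).div_const (n:ℝ)).sub ((hasDerivAt_pow (n+1) t).div_const ((n:ℝ)+1))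
  refine d.congr_deriv ?_
  have : (n:ℝ) ≠ 0 := by positivity
  have h2 : (n:ℝ)+1 ≠ 0 := by positivity
  obtain ⟨m, rfl⟩ : ∃ m, n = m+1 := ⟨n-1, by omega⟩
  simp only [Nat.add_sub_cancel]
  push_cast at *
  field_simp
  ring

set_option maxHeartbeats 800000 in
lemma psi_neg (hP : Pot n ρ κ N Q b) {σ c : ℝ} (h : σ < 0) (h1 : -1 ≤ σ) (ht : 0 ≤ tt ρ σ)
    (hc : 0 ≤ c) (hc1 : c ≤ 1) : psi N b σ ≤ - c * κ * (gg n 1 - gg n (tt ρ σ)) := by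
  have hκ := hP.hκ
  have hρ := hP.hρ
  have hm : AntitoneOn (fun σ => psi N b σ + c * κ * (gg n 1 - gg n (tt ρ σ))) (Set.Icc (-1) σ) := by
    have hd : ∀ x : ℝ, x ≠ 0 → HasDerivAt (fun σ => psi N b σ + c * κ * (gg n 1 - gg n (tt ρ σ)))
        ((κ/ρ) * tt ρ x^(n-1) * (((ρ^2-1)/2)^2 * (x - x⁻¹)^2) / x +
          c * κ * (-(tt ρ x^(n-1)*(1-tt ρ x) * ((ρ^2-1)/2 * (1 - (x^2)⁻¹))))) x := by
      intro x hx
      exact (psi_hasDerivAt hP hx).add ((((gg_hasDerivAt hP.hn (tt ρ x)).comp x (tt_hasDerivAt hx)).const_sub (gg n 1)).const_mul (c*κ))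
    refine antitoneOn_of_hasDerivWithinAt_nonpos (convex_Icc _ _) ?_ ?_ ?_ (f' := fun x => (κ/ρ) * tt ρ x^(n-1) * (((ρ^2-1)/2)^2 * (x - x⁻¹)^2) / x +
          c * κ * (-(tt ρ x^(n-1)*(1-tt ρ x) * ((ρ^2-1)/2 * (1 - (x^2)⁻¹)))))
    · intro x hx
      exact (hd x (by linarith [hx.2] : x < 0).ne).continuousAt.continuousWithinAt
    · intro x hx
      rw [interior_Icc] at hx
      exact (hd x (by linarith [hx.2] : x < 0).ne).hasDerivWithinAt
    · intro x hx
      rw [interior_Icc] at hx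
      obtain ⟨s, rfl⟩ : ∃ s, x = -s := ⟨-x, by simp⟩
      obtain ⟨s0, rfl⟩ : ∃ s, σ = -s := ⟨-σ, by simp⟩
      have hs0 : 0 < s0 := by linarith
      have hs : 0 < s := by linarith [hx.2]
      have hs1 : s < 1 := by linarith [hx.1]
      have hss : s0 < s := by linarith [hx.2]
      have hh : 0 < (ρ^2-1)/2 := by nlinarith
      have htt : 0 ≤ tt ρ (-s) := by
        refine ht.trans ?_
        rw [tt, tt]
        have : -s0 + (-s0)⁻¹ ≤ -s + (-s)⁻¹ := by
          rw [inv_neg, inv_neg]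
          have e : (-s + -s⁻¹) - (-s0 + -s0⁻¹) = (s-s0) * (1-s*s0)/(s*s0) := by field_simp; ring
          have : 0 ≤ (s-s0) * (1-s*s0)/(s*s0) := by
            apply div_nonneg (mul_nonneg (by linarith) (by nlinarith)) (by positivity)
          linarith
        gcongr
      have e1 : 1 - tt ρ (-s) = (ρ^2-1)/2 * ((1-s)^2/s) := by
        rw [tt]; field_simp; ring
      have hle : (ρ^2-1)/2 * ((1-s)^2/s) ≤ 1 := by rw [← e1]; linarith
      have hle2 : (ρ^2-1)/2 * (1-s)^2 ≤ s := by
        rw [← mul_div_assoc, div_le_one hs] at hle; exact hle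
      have hk : ρ * (1-s) ≤ 1+s := by
        apply le_of_sq_le_sq _ (by positivity)
        nlinarith [sq_nonneg (1-s), mul_nonneg (sq_nonneg (1-s)) (show 0 ≤ ρ^2 - 1 by nlinarith)]
      have hT : 0 ≤ tt ρ (-s)^(n-1) := by positivity
      rw [e1]
      have e2 : (κ/ρ) * tt ρ (-s)^(n-1) * (((ρ^2-1)/2)^2 * (-s - (-s)⁻¹)^2) / (-s) +
          c * κ * (-(tt ρ (-s)^(n-1)*((ρ^2-1)/2 * ((1-s)^2/s)) * ((ρ^2-1)/2 * (1 - ((-s)^2)⁻¹)))) =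
          - (κ/ρ * tt ρ (-s)^(n-1) * ((ρ^2-1)/2)^2 * (1-s)^2*(1+s)/s^3 * ((1+s) - c * (ρ * (1-s)))) := by
        generalize tt ρ (-s)^(n-1) = T
        have : ρ ≠ 0 := by linarith
        field_simp
        ring
      rw [e2, neg_nonpos]
      have : 0 ≤ (1+s) - c * (ρ * (1-s)) := by
        have h0 : 0 ≤ ρ * (1-s) := mul_nonneg (by linarith) (by linarith)
        nlinarith
      have : 0 < ρ := by linarith
      positivity
  have := hm (Set.left_mem_Icc.mpr h1) (Set.right_mem_Icc.mpr h1) h1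
  have e : tt ρ (-1) = 1 := by rw [tt]; norm_num
  simp only [e] at this
  simp [psi] at this ⊢
  linarith

lemma real_cases {ζ : ℂ} (hρ : 10 ≤ ρ) (h0 : ζ ≠ 0) (h : (J ρ ζ).im = 0) : ‖ζ‖ = 1 ∨ ∃ σ : ℝ, ζ = σ := by
  rw [J_im] at h
  have : (ρ^2-1)/2 ≠ 0 := by nlinarith
  have hn : normSq ζ ≠ 0 := by simpa using h0
  have := (mul_eq_zero.mp h).resolve_left this
  have e : ζ.im * (normSq ζ - 1) = 0 := by
    field_simp at this; linarith
  rcases mul_eq_zero.mp e with h | h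
  · exact Or.inr ⟨ζ.re, by apply Complex.ext <;> simp [h]⟩
  · left
    have : ‖ζ‖^2 = 1 := by rw [Complex.sq_norm]; linarith
    nlinarith [norm_nonneg ζ]

lemma phi_nonpos (hP : Pot n ρ κ N Q b) {ζ : ℂ} (h0 : ζ ≠ 0) (h1 : ‖ζ‖ ≤ 1) {x : ℝ} (hx : 0 ≤ x)
    (hJ : J ρ ζ = x) : phi N b ζ ≤ 0 := by
  rcases real_cases hP.hρ h0 (by rw [hJ]; simp) with h | ⟨σ, rfl⟩
  · rw [phi_circle N b h]
  · rw [phi_psi]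
    have h0 : σ ≠ 0 := by exact_mod_cast h0
    rw [Complex.norm_real, Real.norm_eq_abs, abs_le] at h1
    rw [J_real] at hJ
    have hJ : tt ρ σ = x := by exact_mod_cast hJ
    rcases lt_or_gt_of_ne h0 with h | h
    · have := psi_neg hP (c := 0) h h1.1 (by rw [hJ]; exact hx) le_rfl (by norm_num)
      simpa using this
    · exact psi_pos hP h h1.2

lemma phi_zero (hP : Pot n ρ κ N Q b) {ζ : ℂ} (h0 : ζ ≠ 0) (h1 : ‖ζ‖ ≤ 1)
    (hJ : J ρ ζ = 0) : phi N b ζ ≤ - (κ / (n*(n+1))) := by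
  have hρ := hP.hρ
  rcases real_cases hP.hρ h0 (by rw [hJ]; simp) with h | ⟨σ, rfl⟩
  · exfalso
    rw [J_circle ρ h] at hJ
    have hJ : ρ^2 + (ρ^2-1) * ζ.re = 0 := by exact_mod_cast hJ
    have := abs_re_le_one h
    nlinarith [mul_nonneg (show 0 ≤ ρ^2-1 by nlinarith) (show 0 ≤ 1 + ζ.re by linarith)]
  · rw [phi_psi]
    have h0 : σ ≠ 0 := by exact_mod_cast h0
    rw [Complex.norm_real, Real.norm_eq_abs, abs_le] at h1
    rw [J_real] at hJ
    have hJ : tt ρ σ = 0 := by exact_mod_cast hJ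
    rcases lt_or_gt_of_ne h0 with h | h
    · have := psi_neg hP (c := 1) h h1.1 hJ.ge (by norm_num) (by norm_num)
      refine this.trans_eq ?_
      rw [hJ, gg, gg]
      have hn := hP.hn
      have : (n:ℝ) ≠ 0 := by positivity
      simp only [one_pow]
      rw [zero_pow (by omega), zero_pow (by omega)]
      field_simp
      ring
    · exfalso
      rw [tt] at hJ
      have : 0 < (ρ^2-1)/2 := by nlinarith
      have : 0 < ρ^2 + (ρ^2-1)/2*(σ + σ⁻¹) := by positivity
      linarith

end Part4

section Part5
lemma prod_split {ι : Type*} [Fintype ι] [DecidableEq ι] (a : ι → ι → ℝ) (hs : ∀ i j, a i j = a j i)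
    (hd : ∀ i, a i i = 1) (k : ι) :
    ∏ i, ∏ j, a i j = (∏ j ∈ Finset.univ.erase k, a k j)^2 *
      ∏ i ∈ Finset.univ.erase k, ∏ j ∈ Finset.univ.erase k, a i j := by
  have e : ∀ i, ∏ j, a i j = a i k * ∏ j ∈ Finset.univ.erase k, a i j := fun i =>
    (Finset.mul_prod_erase Finset.univ (a i) (Finset.mem_univ k)).symm
  rw [← Finset.mul_prod_erase Finset.univ _ (Finset.mem_univ k)]
  simp only [e, hd, one_mul]
  rw [Finset.prod_mul_distrib]
  have : ∏ x ∈ Finset.univ.erase k, a x k = ∏ x ∈ Finset.univ.erase k, a k x :=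
    Finset.prod_congr rfl fun i _ => hs i k
  rw [this]; ring

noncomputable def aa {N : ℕ} (x : Fin N → ℝ) (i j : Fin N) : ℝ := if i = j then 1 else |x i - x j|

noncomputable def FF {N : ℕ} (Q : ℝ[X]) (x : Fin N → ℝ) : ℝ :=
  (∏ i, ∏ j, aa x i j) * ∏ i, Real.exp (Q.eval (x i))^2

lemma aa_nonneg {N : ℕ} (x : Fin N → ℝ) (i j : Fin N) : 0 ≤ aa x i j := by
  unfold aa; split_ifs <;> positivity

lemma aa_le {N : ℕ} (x : Fin N → ℝ) (hx : ∀ i, 0 ≤ x i) (i j : Fin N) :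
    aa x i j ≤ (1 + x i) * (1 + x j) := by
  have := hx i; have := hx j
  have := mul_nonneg (hx i) (hx j)
  unfold aa; split_ifs
  · nlinarith
  · rw [abs_le]; constructor <;> nlinarith

noncomputable def gb (N : ℕ) (Q : ℝ[X]) (t : ℝ) : ℝ := (1+t)^(2*N) * Real.exp (Q.eval t)^2

lemma FF_le {N : ℕ} (Q : ℝ[X]) (x : Fin N → ℝ) (hx : ∀ i, 0 ≤ x i) : FF Q x ≤ ∏ i, gb N Q (x i) := by
  unfold FF gb
  rw [Finset.prod_mul_distrib]
  apply mul_le_mul_of_nonneg_right _ (Finset.prod_nonneg fun i _ => by positivity)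
  calc _ ≤ ∏ i : Fin N, ∏ j : Fin N, ((1 + x i) * (1 + x j)) := by
        apply Finset.prod_le_prod
        · intro i _; exact Finset.prod_nonneg fun j _ => aa_nonneg x i j
        · intro i _
          exact Finset.prod_le_prod (fun j _ => aa_nonneg x i j) fun j _ => aa_le x hx i j
    _ = _ := by
        simp only [Finset.prod_mul_distrib, Finset.prod_const, Finset.card_univ, Fintype.card_fin,
          Finset.prod_pow]
        ring

lemma gb_tendsto (N : ℕ) (Q : ℝ[X]) (hd : 2 ≤ Q.natDegree) (hl : Q.leadingCoeff < 0) :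
    Filter.Tendsto (gb N Q) Filter.atTop (nhds 0) := by
  have hX : (X : ℝ[X]).degree < Q.degree := by
    rw [degree_X]
    have : Q ≠ 0 := by rintro rfl; simp at hd
    rw [degree_eq_natDegree this]
    exact_mod_cast (show 1 < Q.natDegree by omega)
  have h1 : Filter.Tendsto (fun t => (Q + X).eval t) Filter.atTop Filter.atBot := by
    apply Polynomial.tendsto_atBot_of_leadingCoeff_nonpos
    · rw [degree_add_eq_left_of_degree_lt hX]
      exact lt_of_le_of_lt (by rw [degree_X]; norm_num) hX
    · rw [leadingCoeff_add_of_degree_lt' hX]; exact hl.le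
  have h2 := Real.tendsto_pow_mul_exp_neg_atTop_nhds_zero (2*N)
  have h3 : Filter.Tendsto (fun t : ℝ => Real.exp 1 * ((1+t)^(2*N) * Real.exp (-(1+t)))) Filter.atTop (nhds 0) := by
    have := (h2.comp (Filter.tendsto_atTop_add_const_left _ (1:ℝ) Filter.tendsto_id)).const_mul (Real.exp 1)
    simpa using this
  refine squeeze_zero' ?_ ?_ h3
  · filter_upwards [Filter.eventually_ge_atTop 0] with t ht
    unfold gb; positivity
  · filter_upwards [Filter.eventually_ge_atTop 0, h1.eventually (Filter.eventually_le_atBot 0)] with t ht h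
    simp only [eval_add, eval_X] at h
    unfold gb
    have e : Real.exp 1 * ((1+t)^(2*N) * Real.exp (-(1+t))) = (1+t)^(2*N) * Real.exp (-t) := by
      rw [show -t = 1 + -(1+t) by ring, Real.exp_add]; ring
    rw [e]
    gcongr
    rw [← Real.exp_nat_mul]
    apply Real.exp_le_exp.mpr
    push_cast
    linarith

lemma FF_cont {N : ℕ} (Q : ℝ[X]) : Continuous (FF Q : (Fin N → ℝ) → ℝ) := by
  unfold FF
  refine Continuous.mul ?_ ?_
  · refine continuous_finset_prod _ fun i _ => continuous_finset_prod _ fun j _ => ?_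
    unfold aa
    split_ifs <;> fun_prop
  · refine continuous_finset_prod _ fun i _ => ?_
    have := Q.continuous
    fun_prop

lemma FF_max {N : ℕ} (Q : ℝ[X]) (hd : 2 ≤ Q.natDegree) (hl : Q.leadingCoeff < 0) :
    ∃ x : Fin N → ℝ, (∀ i, 0 ≤ x i) ∧ 0 < FF Q x ∧ ∀ y : Fin N → ℝ, (∀ i, 0 ≤ y i) → FF Q y ≤ FF Q x := by
  have hg := gb_tendsto N Q hd hl
  have gnn : ∀ t, 0 ≤ t → 0 ≤ gb N Q t := fun t ht => by unfold gb; positivity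
  have gc : Continuous (gb N Q) := by
    unfold gb; have := Q.continuous; fun_prop
  -- bound
  obtain ⟨B, hB1, hB⟩ : ∃ B : ℝ, 1 ≤ B ∧ ∀ t, 0 ≤ t → gb N Q t ≤ B := by
    obtain ⟨T, hT⟩ := (hg.eventually (gt_mem_nhds one_pos)).exists_forall_of_atTop
    obtain ⟨B, hB⟩ := (isCompact_Icc (a := (0:ℝ)) (b := T)).bddAbove_image gc.continuousOn
    refine ⟨max 1 B, le_max_left _ _, fun t ht => ?_⟩
    rcases le_total t T with h | h
    · exact (hB ⟨t, ⟨ht, h⟩, rfl⟩).trans (le_max_right _ _)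
    · exact (hT t h).le.trans (le_max_left _ _)
  let x0 : Fin N → ℝ := fun i => (i:ℕ)
  have hx0 : 0 < FF Q x0 := by
    unfold FF
    refine mul_pos (Finset.prod_pos fun i _ => Finset.prod_pos fun j _ => ?_) (Finset.prod_pos fun i _ => by positivity)
    unfold aa
    split_ifs with h
    · norm_num
    · rw [abs_pos, sub_ne_zero]
      intro h'
      apply h
      have : ((i:ℕ):ℝ) = (j:ℕ) := h'
      exact Fin.ext (by exact_mod_cast this)
  have hB0 : 0 < FF Q x0 / B^N := by positivity
  obtain ⟨T, hT⟩ := (hg.eventually (gt_mem_nhds hB0)).exists_forall_of_atTop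
  set T' := max T N with hT'
  have hx0m : x0 ∈ Set.pi Set.univ (fun _ : Fin N => Set.Icc (0:ℝ) T') := by
    intro i _
    refine ⟨by simp [x0], le_trans ?_ (le_max_right _ _)⟩
    simp only [x0]
    exact_mod_cast i.2.le
  obtain ⟨x, hx, hmax⟩ := (isCompact_univ_pi (fun _ : Fin N => isCompact_Icc (a := (0:ℝ)) (b := T'))).exists_isMaxOn
    ⟨x0, hx0m⟩ (FF_cont Q).continuousOn
  have hxx0 : FF Q x0 ≤ FF Q x := hmax hx0m
  refine ⟨x, fun i => (hx i trivial).1, hx0.trans_le hxx0, fun y hy => ?_⟩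
  by_cases hym : y ∈ Set.pi Set.univ (fun _ : Fin N => Set.Icc (0:ℝ) T')
  · exact hmax hym
  · refine le_trans ?_ hxx0
    simp only [Set.mem_pi, Set.mem_univ, true_implies, Set.mem_Icc, not_forall] at hym
    obtain ⟨i, hi⟩ := hym
    have hi : T' < y i := by
      by_contra h
      exact hi ⟨hy i, not_lt.mp h⟩
    refine (FF_le Q y hy).trans ?_
    rw [← Finset.mul_prod_erase Finset.univ _ (Finset.mem_univ i)]
    calc _ ≤ FF Q x0 / B^N * B^(N) := by
          gcongr
          · exact Finset.prod_nonneg fun j _ => gnn _ (hy j)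
          · exact (hT _ ((le_max_left _ _).trans hi.le)).le
          · calc _ ≤ ∏ j ∈ Finset.univ.erase i, B := Finset.prod_le_prod (fun j _ => gnn _ (hy j)) fun j _ => hB _ (hy j)
              _ ≤ B^N := by
                rw [Finset.prod_const]
                apply pow_le_pow_right₀ hB1
                exact (Finset.card_le_univ _).trans (by simp)
      _ = FF Q x0 := by field_simp

/-- polynomial-exponential functions -/
noncomputable def ww {N : ℕ} (Q : ℝ[X]) (x : Fin N → ℝ) (z : ℂ) : ℂ :=
  exp (aeval z Q) * ∏ k, (z - x k)
noncomputable def qq {N : ℕ} (Q : ℝ[X]) (x : Fin N → ℝ) (k : Fin N) (z : ℂ) : ℂ :=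
  exp (aeval z Q) * ∏ j ∈ Finset.univ.erase k, (z - x j)

lemma ww_qq {N : ℕ} (Q : ℝ[X]) (x : Fin N → ℝ) (k : Fin N) (z : ℂ) :
    ww Q x z = (z - x k) * qq Q x k z := by
  rw [ww, qq, ← Finset.mul_prod_erase Finset.univ _ (Finset.mem_univ k)]; ring

lemma norm_qq_real {N : ℕ} (Q : ℝ[X]) (x : Fin N → ℝ) (k : Fin N) (t : ℝ) :
    ‖qq Q x k (t:ℂ)‖ = Real.exp (Q.eval t) * ∏ j ∈ Finset.univ.erase k, |t - x j| := by
  rw [qq, norm_mul, norm_prod, aeval_real, Complex.norm_exp, ofReal_re]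
  congr 1
  refine Finset.prod_congr rfl fun j _ => ?_
  rw [← ofReal_sub, Complex.norm_real, Real.norm_eq_abs]

lemma FF_split {N : ℕ} (Q : ℝ[X]) (x : Fin N → ℝ) (k : Fin N) (t : ℝ) :
    FF Q (Function.update x k t) = ‖qq Q x k (t:ℂ)‖^2 *
      ((∏ i ∈ Finset.univ.erase k, ∏ j ∈ Finset.univ.erase k, aa x i j) *
        ∏ i ∈ Finset.univ.erase k, Real.exp (Q.eval (x i))^2) := by
  rw [FF, prod_split (aa (Function.update x k t)) _ _ k, norm_qq_real,
    ← Finset.mul_prod_erase Finset.univ _ (Finset.mem_univ k)]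
  · have e1 : ∏ j ∈ Finset.univ.erase k, aa (Function.update x k t) k j =
        ∏ j ∈ Finset.univ.erase k, |t - x j| := by
      refine Finset.prod_congr rfl fun j hj => ?_
      have hj := Finset.ne_of_mem_erase hj
      simp [aa, hj, hj.symm]
    have e2 : (∏ i ∈ Finset.univ.erase k, ∏ j ∈ Finset.univ.erase k, aa (Function.update x k t) i j) =
       (∏ i ∈ Finset.univ.erase k, ∏ j ∈ Finset.univ.erase k, aa x i j) := by
      refine Finset.prod_congr rfl fun i hi => Finset.prod_congr rfl fun j hj => ?_
      have hj := Finset.ne_of_mem_erase hj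
      have hi := Finset.ne_of_mem_erase hi
      simp [aa, hj, hi]
    have e3 : ∏ i ∈ Finset.univ.erase k, Real.exp (Q.eval (Function.update x k t i))^2 =
        ∏ i ∈ Finset.univ.erase k, Real.exp (Q.eval (x i))^2 := by
      refine Finset.prod_congr rfl fun i hi => ?_
      have hi := Finset.ne_of_mem_erase hi
      simp [hi]
    rw [e1, e2, e3]
    simp only [Function.update_self]
    ring
  · intro i j; unfold aa; rw [abs_sub_comm]; simp [eq_comm]
  · intro i; simp [aa]

structure Fek (n : ℕ) (ρ κ : ℝ) (N : ℕ) (Q b : ℝ[X]) (x : Fin N → ℝ) (M : ℝ) : Prop where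
  pot : Pot n ρ κ N Q b
  hx : ∀ i, 0 ≤ x i
  inj : Function.Injective x
  hM : 0 < M
  one : ∀ k, ∀ t : ℝ, 0 ≤ t → ‖qq Q x k (t:ℂ)‖ ≤ ‖qq Q x k (x k : ℂ)‖
  upp : ∀ t : ℝ, 0 ≤ t → ‖ww Q x (t:ℂ)‖ ≤ M * (1 + t)
  low : ∀ k, M ≤ (1 + x k) * ‖qq Q x k (x k : ℂ)‖

lemma Pot.natDegree {n : ℕ} {ρ κ : ℝ} {N : ℕ} {Q b : ℝ[X]} (hP : Pot n ρ κ N Q b) :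
    Q.natDegree = n+1 ∧ Q.leadingCoeff < 0 := by
  have hκ := hP.hκ
  have hρ := hP.hρ
  have h1 := hP.top
  have h2 : 0 < κ/ρ := by positivity
  have h3 : Q.coeff (n+1) < 0 := by
    have : (0:ℝ) < n+1 := by positivity
    by_contra h
    push Not at h
    nlinarith [mul_nonneg h this.le]
  have hd : Q.natDegree = n+1 := le_antisymm hP.deg (le_natDegree_of_ne_zero h3.ne)
  exact ⟨hd, by rw [leadingCoeff, hd]; exact h3⟩

lemma exists_fek {n : ℕ} {ρ κ : ℝ} {N : ℕ} {Q b : ℝ[X]} (hP : Pot n ρ κ N Q b) :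
    ∃ x M, Fek n ρ κ N Q b x M := by
  obtain ⟨hd, hl⟩ := hP.natDegree
  have hn := hP.hn
  obtain ⟨x, hx, hpos, hmax⟩ := FF_max (N := N) Q (by omega) hl
  have inj : Function.Injective x := by
    intro i j hij
    by_contra hne
    apply hpos.ne'
    have h : aa x i j = 0 := by simp [aa, hne, hij]
    rw [FF, Finset.prod_eq_zero (Finset.mem_univ i) (Finset.prod_eq_zero (Finset.mem_univ j) h), zero_mul]
  have one : ∀ k, ∀ t : ℝ, 0 ≤ t → ‖qq Q x k (t:ℂ)‖ ≤ ‖qq Q x k (x k : ℂ)‖ := by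
    intro k t ht
    have h1 := hmax (Function.update x k t) (by
      intro i
      by_cases h : i = k
      · subst h; simpa using ht
      · simpa [h] using hx i)
    have h2 := FF_split Q x k (x k)
    rw [Function.update_eq_self] at h2
    rw [h2] at hpos
    rw [FF_split, h2] at h1
    set R := ((∏ i ∈ Finset.univ.erase k, ∏ j ∈ Finset.univ.erase k, aa x i j) *
        ∏ i ∈ Finset.univ.erase k, Real.exp (Q.eval (x i))^2)
    have hR : 0 < R := pos_of_mul_pos_right hpos (by positivity)
    exact le_of_sq_le_sq (le_of_mul_le_mul_right h1 hR) (norm_nonneg _)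
  have qpos : ∀ k, 0 < ‖qq Q x k (x k : ℂ)‖ := by
    intro k
    rw [norm_qq_real]
    refine mul_pos (Real.exp_pos _) (Finset.prod_pos fun j hj => ?_)
    rw [abs_pos, sub_ne_zero]
    exact fun h => (Finset.ne_of_mem_erase hj) (inj h).symm
  have hN := hP.hN
  haveI : Nonempty (Fin N) := ⟨⟨0, by omega⟩⟩
  obtain ⟨k0, hk0⟩ := Finite.exists_min (fun k => (1 + x k) * ‖qq Q x k (x k : ℂ)‖)
  refine ⟨x, (1 + x k0) * ‖qq Q x k0 (x k0 : ℂ)‖, hP, hx, inj, ?_, one, ?_, hk0⟩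
  · have := hx k0
    have := qpos k0
    positivity
  · intro t ht
    rw [ww_qq Q x k0, norm_mul, ← ofReal_sub, Complex.norm_real, Real.norm_eq_abs]
    have h0 := hx k0
    have : |t - x k0| ≤ (1+t) * (1 + x k0) := by
      rw [abs_le]; constructor <;> nlinarith [mul_nonneg ht h0]
    calc _ ≤ ((1+t) * (1 + x k0)) * ‖qq Q x k0 (x k0 : ℂ)‖ := by
          gcongr
          exact one k0 t ht
      _ = _ := by ring

end Part5

section Part6
noncomputable def fa {N : ℕ} (ρ : ℝ) (x : Fin N → ℝ) (k : Fin N) (ζ : ℂ) : ℂ :=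
  ζ * ((ρ^2 - x k : ℝ) : ℂ) + (((ρ^2-1)/2 : ℝ) : ℂ) * (ζ^2+1)

noncomputable def ff {N : ℕ} (ρ : ℝ) (b : ℝ[X]) (x : Fin N → ℝ) (ζ : ℂ) : ℂ :=
  (∏ k, fa ρ x k ζ) * exp (2 * aeval ζ b)

noncomputable def AA (ρ : ℝ) (ζ : ℂ) : ℂ := ((ρ+1 : ℝ) : ℂ) + ((ρ-1 : ℝ):ℂ) * ζ

lemma fa_eq {N : ℕ} (ρ : ℝ) (x : Fin N → ℝ) (k : Fin N) {ζ : ℂ} (h : ζ ≠ 0) :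
    fa ρ x k ζ = ζ * (J ρ ζ - x k) := by
  rw [fa, J]; field_simp; push_cast; ring

lemma fa_diff {N : ℕ} (ρ : ℝ) (x : Fin N → ℝ) (k : Fin N) : Differentiable ℂ (fa ρ x k) := by
  unfold fa; fun_prop

lemma aeval_diff (b : ℝ[X]) : Differentiable ℂ (fun z : ℂ => aeval z b) :=
  fun z => (aeval_hasDerivAt b z).differentiableAt

lemma ff_diff {N : ℕ} (ρ : ℝ) (b : ℝ[X]) (x : Fin N → ℝ) : Differentiable ℂ (ff ρ b x) := by
  unfold ff
  have h1 := aeval_diff b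
  have h2 : Differentiable ℂ (fun ζ => ∏ k, fa ρ x k ζ) := by
    have := fun k => fa_diff ρ x k
    fun_prop
  exact h2.mul ((h1.const_mul 2).cexp)

lemma AA_diff (ρ : ℝ) : Differentiable ℂ (AA ρ) := by unfold AA; fun_prop

variable {n : ℕ} {ρ κ : ℝ} {N : ℕ} {Q b : ℝ[X]} {x : Fin N → ℝ} {M : ℝ}

lemma norm_ff (hP : Pot n ρ κ N Q b) (x : Fin N → ℝ) {ζ : ℂ} (h : ζ ≠ 0) :
    ‖ff ρ b x ζ‖ = ‖ww Q x (J ρ ζ)‖ * Real.exp (- phi N b ζ) := by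
  have hn : 0 < ‖ζ‖ := norm_pos_iff.mpr h
  rw [ff, ww, hP.hQ ζ h]
  have e : ∏ k, fa ρ x k ζ = ζ^N * ∏ k, (J ρ ζ - x k) := by
    simp only [fa_eq ρ x _ h, Finset.prod_mul_distrib, Finset.prod_const, Finset.card_univ, Fintype.card_fin]
  rw [e]
  simp only [norm_mul, norm_pow, Complex.norm_exp, phi]
  have e2 : ‖ζ‖^N = Real.exp (N * Real.log ‖ζ‖) := by
    rw [mul_comm, Real.exp_mul, Real.exp_log hn, Real.rpow_natCast]
  rw [e2]
  have e3 : (2 * aeval ζ b).re = 2 * (aeval ζ b).re := by simp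
  rw [e3, sub_re, add_re]
  rw [show Real.exp (N * Real.log ‖ζ‖) * ‖∏ k, (J ρ ζ - x k)‖ * Real.exp (2 * (aeval ζ b).re) =
    ‖∏ k, (J ρ ζ - x k)‖ * (Real.exp (N * Real.log ‖ζ‖) * Real.exp (2 * (aeval ζ b).re)) by ring,
    ← Real.exp_add, mul_right_comm, ← Real.exp_add, mul_comm]
  congr 2; ring

lemma AA_mul (ρ : ℝ) {ζ : ℂ} (h : ζ ≠ 0) : AA ρ ζ * AA ρ ζ⁻¹ = 2 * (1 + J ρ ζ) := by
  rw [AA, AA, J]; field_simp; push_cast; ring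

lemma AA_conj (ρ : ℝ) (ζ : ℂ) : AA ρ ((starRingEnd ℂ) ζ) = (starRingEnd ℂ) (AA ρ ζ) := by
  simp only [AA, map_add, map_mul, conj_ofReal]

lemma AA_circle (ρ : ℝ) {ζ : ℂ} (h : ‖ζ‖ = 1) : ‖AA ρ ζ‖^2 = 2 * (1 + (ρ^2 + (ρ^2-1) * ζ.re)) := by
  have h0 : ζ ≠ 0 := by rintro rfl; simp at h
  have := AA_mul ρ h0
  rw [inv_of_circle h, AA_conj, J_circle ρ h, Complex.mul_conj, Complex.normSq_eq_norm_sq] at this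
  exact_mod_cast this

lemma AA_low (hρ : 10 ≤ ρ) {ζ : ℂ} (h : ‖ζ‖ ≤ 1) : 2 ≤ ‖AA ρ ζ‖ := by
  have h1 : ‖((ρ-1 : ℝ):ℂ) * ζ‖ ≤ ρ - 1 := by
    rw [norm_mul, Complex.norm_real, Real.norm_eq_abs, abs_of_nonneg (by linarith)]
    nlinarith
  have h2 : ‖((ρ+1 : ℝ):ℂ)‖ = ρ + 1 := by
    rw [Complex.norm_real, Real.norm_eq_abs, abs_of_nonneg (by linarith)]
  have := norm_sub_norm_le ((ρ+1 : ℝ):ℂ) (-(((ρ-1 : ℝ):ℂ) * ζ))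
  rw [norm_neg, sub_neg_eq_add, h2] at this
  unfold AA
  linarith

lemma AA_ne (hρ : 10 ≤ ρ) {ζ : ℂ} (h : ‖ζ‖ ≤ 1) : AA ρ ζ ≠ 0 := by
  have := AA_low hρ h
  intro h0; rw [h0] at this; simp at this; linarith

lemma AA_upp (hρ : 10 ≤ ρ) {ζ : ℂ} (h0 : ζ ≠ 0) (h : ‖ζ‖ ≤ 1) : ‖AA ρ ζ‖^2/2 ≤ 2 * (3 + ‖J ρ ζ‖) := by
  have hn : 0 < ‖ζ‖ := norm_pos_iff.mpr h0
  have e : AA ρ ζ = 2 + ((ρ-1:ℝ):ℂ) * (1+ζ) := by rw [AA]; push_cast; ring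
  have e2 : (J ρ ζ - 1) * ζ = (((ρ^2-1)/2 : ℝ):ℂ) * (1+ζ)^2 := by
    rw [J]; field_simp; push_cast; ring
  have e3 := congrArg norm e2
  rw [norm_mul, norm_mul, norm_pow, Complex.norm_real, Real.norm_eq_abs, abs_of_nonneg (by nlinarith)] at e3
  have h1 : (ρ-1)^2/2 * ‖1+ζ‖^2 ≤ ‖J ρ ζ - 1‖ := by
    calc _ ≤ (ρ^2-1)/2 * ‖1+ζ‖^2 := by gcongr; nlinarith
      _ ≤ _ := by rw [← e3]; nlinarith [norm_nonneg (J ρ ζ - 1)]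
  have h2 : ‖AA ρ ζ‖ ≤ 2 + (ρ-1) * ‖1+ζ‖ := by
    rw [e]
    refine (norm_add_le _ _).trans ?_
    rw [norm_mul, Complex.norm_real, Real.norm_eq_abs, abs_of_nonneg (by linarith)]
    simp
  have h3 : ‖J ρ ζ - 1‖ ≤ ‖J ρ ζ‖ + 1 := (norm_sub_le _ _).trans (by simp)
  have h4 : ‖AA ρ ζ‖^2 ≤ (2 + (ρ-1) * ‖1+ζ‖)^2 := by gcongr
  nlinarith [sq_nonneg (2 - (ρ-1) * ‖1+ζ‖)]

lemma upper (hF : Fek n ρ κ N Q b x M) {ζ : ℂ} (h0 : ζ ≠ 0) (h1 : ‖ζ‖ ≤ 1) :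
    ‖ww Q x (J ρ ζ)‖ ≤ M * (‖AA ρ ζ‖^2/2) * Real.exp (phi N b ζ) := by
  have hρ := hF.pot.hρ
  have key : ‖ff ρ b x ζ / AA ρ ζ^2‖ ≤ M/2 := by
    refine Complex.norm_le_of_forall_mem_frontier_norm_le (U := Metric.ball 0 1) (f := fun ζ => ff ρ b x ζ / AA ρ ζ^2)
      Metric.isBounded_ball ?_ ?_ (z := ζ) ?_
    · apply DifferentiableOn.diffContOnCl
      rw [closure_ball _ one_ne_zero]
      intro z hz
      have hz : ‖z‖ ≤ 1 := by simpa using hz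
      exact ((ff_diff ρ b x z).div ((AA_diff ρ z).pow 2) (pow_ne_zero _ (AA_ne hρ hz))).differentiableWithinAt
    · intro z hz
      rw [frontier_ball _ one_ne_zero] at hz
      have hz : ‖z‖ = 1 := by simpa using hz
      have hz0 : z ≠ 0 := by rintro rfl; simp at hz
      rw [norm_div, norm_pow, norm_ff hF.pot x hz0, phi_circle N b hz, AA_circle ρ hz, J_circle ρ hz]
      have ht : 0 ≤ ρ^2 + (ρ^2-1) * z.re := by
        have := abs_re_le_one hz
        nlinarith [mul_nonneg (show 0 ≤ ρ^2-1 by nlinarith) (show 0 ≤ 1 + z.re by linarith)]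
      have := hF.upp _ ht
      rw [div_le_iff₀ (by linarith)]
      simp only [neg_zero, Real.exp_zero, mul_one]
      linarith
    · rw [closure_ball _ one_ne_zero]; simpa using h1
  rw [norm_div, norm_pow, norm_ff hF.pot x h0, Real.exp_neg] at key
  have hA := AA_low hρ h1
  have hA2 : 0 < ‖AA ρ ζ‖^2 := by positivity
  rw [div_le_iff₀ hA2, mul_inv_le_iff₀ (Real.exp_pos _)] at key
  linarith

lemma upper' (hF : Fek n ρ κ N Q b x M) {ζ : ℂ} (h0 : ζ ≠ 0) (h1 : ‖ζ‖ ≤ 1) :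
    ‖ww Q x (J ρ ζ)‖ ≤ 2 * M * (3 + ‖J ρ ζ‖) * Real.exp (phi N b ζ) := by
  refine (upper hF h0 h1).trans ?_
  have := AA_upp hF.pot.hρ h0 h1
  have := hF.hM
  calc _ ≤ M * (2 * (3 + ‖J ρ ζ‖)) * Real.exp (phi N b ζ) := by gcongr
    _ = _ := by ring

/-- bound near a nonnegative real point -/
lemma upper_near (hF : Fek n ρ κ N Q b x M) {l r : ℝ} (hl : 0 ≤ l) (hr : 0 ≤ r) (hr1 : r ≤ 1) {z : ℂ} (hz : ‖z - l‖ ≤ r) :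
    ‖ww Q x z‖ ≤ 2 * M * (4 + l) * Real.exp (κ * (l+3)^n * r) := by
  have hρ := hF.pot.hρ
  have hκ := hF.pot.hκ
  have hM := hF.hM
  obtain ⟨ζ, h0, h1, hJ⟩ := exists_zeta hρ z
  obtain ⟨ζ', h0', h1', hJ'⟩ := exists_zeta hρ (l:ℂ)
  have hl' : ‖(l:ℂ)‖ = l := by rw [Complex.norm_real, Real.norm_eq_abs, abs_of_nonneg hl]
  have hzn : ‖z‖ ≤ l + 1 := by
    have := norm_le_norm_add_norm_sub' z (l:ℂ)
    rw [hl'] at this; linarith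
  have lip := phi_lip hF.pot h0 h0' h1 h1' (by rw [hJ']; simp) (K := l+1) (by rw [hJ]; exact hzn) (by rw [hJ', hl']; linarith)
  have neg := phi_nonpos hF.pot h0' h1' hl hJ'
  rw [hJ, hJ'] at lip
  have hphi : phi N b ζ ≤ κ * (l+3)^n * r := by
    have h2 : κ * (l+1+2)^n * ‖z - l‖ ≤ κ * (l+3)^n * r := by
      rw [show l+1+2 = l+3 by ring]; gcongr
    linarith [le_abs_self (phi N b ζ - phi N b ζ')]
  have := upper' hF h0 h1
  rw [hJ] at this
  refine this.trans ?_
  gcongr 2 * M * ?_ * Real.exp ?_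
  linarith

lemma upper_zero (hF : Fek n ρ κ N Q b x M) {r : ℝ} (hr : 0 ≤ r) (hr1 : r ≤ 1) {z : ℂ} (hz : ‖z‖ ≤ r) :
    ‖ww Q x z‖ ≤ 8 * M * Real.exp (-(κ/(n*(n+1))) + κ * 3^n * r) := by
  have hρ := hF.pot.hρ
  have hκ := hF.pot.hκ
  have hM := hF.hM
  obtain ⟨ζ, h0, h1, hJ⟩ := exists_zeta hρ z
  obtain ⟨ζ', h0', h1', hJ'⟩ := exists_zeta hρ (0:ℂ)
  have lip := phi_lip hF.pot h0 h0' h1 h1' (by rw [hJ']; simp) (K := 1) (by rw [hJ]; linarith) (by rw [hJ']; simp)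
  have neg := phi_zero hF.pot h0' h1' hJ'
  rw [hJ, hJ', sub_zero] at lip
  have hphi : phi N b ζ ≤ -(κ/(n*(n+1))) + κ * 3^n * r := by
    have h2 : κ * (1+2)^n * ‖z‖ ≤ κ * 3^n * r := by
      rw [show (1:ℝ)+2 = 3 by norm_num]; gcongr
    linarith [le_abs_self (phi N b ζ - phi N b ζ')]
  have := upper' hF h0 h1
  rw [hJ] at this
  refine this.trans ?_
  calc _ ≤ 2 * M * (3 + 1) * Real.exp (-(κ/(n*(n+1))) + κ * 3^n * r) := by gcongr; linarith
    _ = _ := by ring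

lemma upper_all (hF : Fek n ρ κ N Q b x M) (z : ℂ) :
    ‖ww Q x z‖ ≤ 2 * M * (3 + ‖z‖) * Real.exp (κ * (‖z‖+2)^n * ‖z‖) := by
  have hρ := hF.pot.hρ
  have hκ := hF.pot.hκ
  have hM := hF.hM
  obtain ⟨ζ, h0, h1, hJ⟩ := exists_zeta hρ z
  obtain ⟨ζ', h0', h1', hJ'⟩ := exists_zeta hρ (0:ℂ)
  have lip := phi_lip hF.pot h0 h0' h1 h1' (by rw [hJ']; simp) (K := ‖z‖) (by rw [hJ]) (by rw [hJ']; simp)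
  have neg := phi_nonpos hF.pot h0' h1' le_rfl (by rw [hJ']; simp)
  rw [hJ, hJ', sub_zero] at lip
  have := upper' hF h0 h1
  rw [hJ] at this
  refine this.trans ?_
  gcongr
  linarith [le_abs_self (phi N b ζ - phi N b ζ')]

lemma qq_diff (Q : ℝ[X]) (x : Fin N → ℝ) (k : Fin N) : Differentiable ℂ (qq Q x k) := by
  unfold qq
  have h2 : Differentiable ℂ (fun z : ℂ => ∏ j ∈ Finset.univ.erase k, (z - x j)) := by fun_prop
  exact (aeval_diff Q).cexp.mul h2

lemma ww_diff (Q : ℝ[X]) (x : Fin N → ℝ) : Differentiable ℂ (ww Q x) := by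
  unfold ww
  have h2 : Differentiable ℂ (fun z : ℂ => ∏ j, (z - (x j:ℂ))) := by fun_prop
  exact (aeval_diff Q).cexp.mul h2

/-- q_k bounded on a ball by w / r -/
lemma qq_ball (k : Fin N) {r B : ℝ} (hr : 0 < r) (hB : ∀ z : ℂ, ‖z - x k‖ ≤ r → ‖ww Q x z‖ ≤ B) {z : ℂ}
    (hz : ‖z - x k‖ ≤ r) : ‖qq Q x k z‖ ≤ B / r := by
  refine Complex.norm_le_of_forall_mem_frontier_norm_le (U := Metric.ball (x k : ℂ) r) (f := qq Q x k)
      Metric.isBounded_ball (qq_diff Q x k).diffContOnCl ?_ (z := z) ?_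
  · intro y hy
    rw [frontier_ball _ hr.ne', mem_sphere_iff_norm] at hy
    have := hB y hy.le
    rw [ww_qq Q x k, norm_mul, hy] at this
    rw [le_div_iff₀ hr]; linarith
  · rw [closure_ball _ hr.ne', mem_closedBall_iff_norm]; exact hz

lemma unstuck (hF : Fek n ρ κ N Q b x M)
    (hκ1 : 16 * 3^n * (n*(n+1)) * Real.exp (-(κ/(2*(n*(n+1))))) < 1) (k : Fin N) : 0 < x k := by
  rcases (hF.hx k).lt_or_eq with h | h
  · exact h
  exfalso
  have hM := hF.hM
  have hn : (1:ℝ) ≤ n := by exact_mod_cast hF.pot.hn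
  set a : ℝ := n*(n+1) with ha
  have ha2 : 1 ≤ a := by nlinarith
  have h3 : (1:ℝ) ≤ 3^n := one_le_pow₀ (by norm_num)
  set r : ℝ := 1/(2*3^n*a) with hr
  have hr0 : 0 < r := by positivity
  have hr1 : r ≤ 1 := by
    rw [hr, div_le_one (by positivity)]; nlinarith
  have h1 := qq_ball (Q := Q) (x := x) k hr0 (B := 8 * M * Real.exp (-(κ/(2*a)))) (by
    intro z hz
    rw [← h, ofReal_zero, sub_zero] at hz
    refine (upper_zero hF hr0.le hr1 hz).trans_eq ?_
    congr 2
    rw [hr, ← ha]; field_simp; ring) (z := (x k:ℂ)) (by simpa using hr0.le)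
  have h2 := hF.low k
  rw [← h, add_zero, one_mul] at h2
  rw [← h] at h1
  have h4 := h2.trans h1
  rw [le_div_iff₀ hr0, hr] at h4
  rw [mul_one_div, div_le_iff₀ (by positivity)] at h4
  have : M * (16 * 3^n * a * Real.exp (-(κ/(2*a)))) < M * 1 := by gcongr
  nlinarith

end Part6

section Part7
variable {n : ℕ} {ρ κ : ℝ} {N : ℕ} {Q b : ℝ[X]} {x : Fin N → ℝ} {M : ℝ}

/-- radius of the disc removed around a zero -/
noncomputable def rr (n : ℕ) (κ θ l : ℝ) : ℝ := θ / (36 * κ^2 * (l+4)^(2*n+2))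

lemma rr_pos {θ l : ℝ} (hκ : 1 ≤ κ) (hθ : 0 < θ) (hl : 0 ≤ l) : 0 < rr n κ θ l := by
  unfold rr; positivity

lemma rr_le {θ l : ℝ} (hκ : 1 ≤ κ) (hθ : 0 < θ) (hθ1 : θ ≤ 1) (hl : 0 ≤ l) :
    rr n κ θ l ≤ θ / 36 ∧ rr n κ θ l * (36 * κ^2 * (l+4)^(2*n+2)) ≤ 1 ∧ κ * (l+3)^n * rr n κ θ l ≤ 1/2 := by
  have h4 : (1:ℝ) ≤ (l+4)^(2*n+2) := one_le_pow₀ (by linarith)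
  have hκ2 : 1 ≤ κ^2 := one_le_pow₀ hκ
  have h5 : (1:ℝ) ≤ (l+4)^(n+2) := one_le_pow₀ (by linarith)
  have hD : 0 < 36 * κ^2 * (l+4)^(2*n+2) := by positivity
  refine ⟨?_, ?_, ?_⟩
  · unfold rr
    apply div_le_div_of_nonneg_left hθ.le (by norm_num)
    nlinarith [mul_le_mul hκ2 h4 zero_le_one (by positivity)]
  · unfold rr
    rw [div_mul_cancel₀ _ hD.ne']; exact hθ1
  · unfold rr
    rw [mul_div_assoc', div_le_iff₀ hD]
    have e1 : (l+3)^n ≤ (l+4)^n := by gcongr; linarith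
    have e2 : (l+4)^(2*n+2) = (l+4)^n * (l+4)^(n+2) := by rw [← pow_add]; congr 1; omega
    have e3 : κ * (l+3)^n * θ ≤ κ^2 * ((l+4)^n * (l+4)^(n+2)) := by
      calc _ ≤ κ * (l+4)^n * 1 := by gcongr
        _ ≤ (κ * κ) * ((l+4)^n * (l+4)^(n+2)) := by
          have : 0 ≤ (l+4)^n := by positivity
          calc κ * (l+4)^n * 1 = (κ * 1) * ((l+4)^n * 1) := by ring
            _ ≤ _ := by gcongr
        _ = _ := by ring
    rw [e2]
    have : 0 ≤ κ^2 * ((l+4)^n * (l+4)^(n+2)) := by positivity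
    linarith

lemma qq_low (hF : Fek n ρ κ N Q b x M) (hκ : 1 ≤ κ) (k : Fin N) {z : ℂ} {θ : ℝ} (hθ : 0 < θ) (hθ1 : θ ≤ 1)
    (hz : ‖z - x k‖ ≤ rr n κ θ (x k)) : M / (2 * (1 + x k)) ≤ ‖qq Q x k z‖ := by
  have hM := hF.hM
  have hl := hF.hx k
  set l := x k with hldef
  obtain ⟨s1, s2, s3⟩ := rr_le (n := n) hκ hθ hθ1 hl
  set r0 : ℝ := 1 / (κ * (l+3)^n) with hr0
  have hp : 0 < κ * (l+3)^n := by positivity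
  have hp1 : 1 ≤ κ * (l+3)^n := by
    have : (1:ℝ) ≤ (l+3)^n := one_le_pow₀ (by linarith)
    nlinarith
  have hr0p : 0 < r0 := by positivity
  have hr01 : r0 ≤ 1 := by rw [hr0, div_le_one hp]; exact hp1
  have hlt : rr n κ θ l < r0 := by
    rw [hr0, lt_div_iff₀ hp]; linarith
  have he : Real.exp 1 ≤ 3 := by linarith [Real.exp_one_lt_d9]
  have hB : ∀ y : ℂ, ‖y - x k‖ ≤ r0 → ‖qq Q x k y‖ ≤ 6 * M * κ * (l+4)^(n+1) := by
    intro y hy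
    have := qq_ball (Q := Q) (x := x) k hr0p (B := 2 * M * (4 + l) * 3) (by
      intro z hz
      refine (upper_near hF hl hr0p.le hr01 hz).trans ?_
      rw [hr0, mul_one_div_cancel hp.ne']
      gcongr) hy
    refine this.trans ?_
    rw [hr0, div_div_eq_mul_div, div_one]
    calc 2 * M * (4 + l) * 3 * (κ * (l+3)^n) ≤ 2 * M * (4 + l) * 3 * (κ * (l+4)^n) := by gcongr; linarith
      _ = _ := by rw [pow_succ]; ring
  set L := 6 * M * κ * (l+4)^(n+1) with hL
  have hLp : 0 < L := by positivity
  have hsch := Complex.dist_le_div_mul_dist_of_mapsTo_ball (f := qq Q x k) (c := (x k:ℂ)) (R₁ := r0) (R₂ := 3*L)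
    (z := z) (qq_diff Q x k).differentiableOn (by
      intro y hy
      rw [mem_ball_iff_norm] at hy
      rw [Metric.mem_closedBall, dist_eq_norm]
      refine (norm_sub_le _ _).trans ?_
      have a1 := hB y hy.le
      have a2 := hB (x k) (by simpa using hr0p.le)
      linarith) (by rw [mem_ball_iff_norm]; exact hz.trans_lt hlt)
  rw [dist_eq_norm, dist_eq_norm] at hsch
  have h2 := hF.low k
  have h3 : 3*L/r0 * ‖z - x k‖ ≤ M / (2*(1+l)) := by
    calc _ ≤ 3*L/r0 * rr n κ θ l := by gcongr
      _ = 18 * M * κ^2 * ((l+4)^(n+1) * (l+3)^n) * rr n κ θ l := by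
        rw [hr0, hL, div_div_eq_mul_div, div_one]; ring
      _ ≤ 18 * M * κ^2 * ((l+4)^(n+1) * (l+4)^n) * rr n κ θ l := by
        have := (rr_pos (n := n) hκ hθ hl).le
        gcongr; linarith
      _ ≤ _ := by
        rw [le_div_iff₀ (by positivity)]
        have e : (l+4)^(2*n+2) = (l+4)^(n+1) * (l+4)^n * (l+4) := by
          rw [← pow_add, ← pow_succ]; congr 1; omega
        rw [e] at s2
        have hr := (rr_pos (n := n) hκ hθ hl).le
        have hw : 0 ≤ κ^2 * ((l+4)^(n+1) * (l+4)^n) * rr n κ θ l := by positivity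
        set W := κ^2 * ((l+4)^(n+1) * (l+4)^n) * rr n κ θ l with hW
        have s2' : 36 * W * (l+4) ≤ 1 := by rw [hW]; linarith
        have e' : 18 * M * κ^2 * ((l+4)^(n+1) * (l+4)^n) * rr n κ θ l * (2 * (1+l)) = M * (36 * W * (1+l)) := by
          rw [hW]; ring
        rw [e']
        have : 36 * W * (1+l) ≤ 1 := by nlinarith
        nlinarith
  have h4 : M/(1+l) ≤ ‖qq Q x k (x k)‖ := by
    rw [div_le_iff₀ (by positivity)]; linarith
  have h5 : M/(1+l) = M/(2*(1+l)) + M/(2*(1+l)) := by field_simp; ring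
  have h6 := norm_sub_norm_le (qq Q x k (x k)) (qq Q x k z)
  rw [norm_sub_rev] at h6
  linarith

lemma ww_low (hF : Fek n ρ κ N Q b x M) (hκ : 1 ≤ κ) (k : Fin N) {z : ℂ} {θ : ℝ} (hθ : 0 < θ) (hθ1 : θ ≤ 1)
    (hz : ‖z - x k‖ = rr n κ θ (x k)) :
    θ * M / (72 * κ^2 * 8^(2*n+3)) ≤ ‖ww Q x z‖ * ‖1+z‖^(2*n+3) := by
  have hM := hF.hM
  have hl := hF.hx k
  obtain ⟨s1, s2, s3⟩ := rr_le (n := n) hκ hθ hθ1 hl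
  have hr := (rr_pos (n := n) hκ hθ hl)
  have h1 := qq_low hF hκ k hθ hθ1 hz.le
  rw [ww_qq Q x k, norm_mul, hz]
  set l := x k with hldef
  have h2 : (l+4)/8 ≤ ‖1+z‖ := by
    have a := norm_sub_norm_le (((1+l:ℝ)):ℂ) (-(z - l))
    rw [Complex.norm_real, Real.norm_eq_abs, abs_of_nonneg (by linarith), norm_neg, hz] at a
    have e : (((1+l:ℝ)):ℂ) - (-(z - l)) = 1 + z := by push_cast; ring
    rw [e] at a
    linarith
  calc _ = θ / (36 * κ^2 * (l+4)^(2*n+2)) * (M / (2 * (l+4))) * ((l+4)/8)^(2*n+3) := by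
        rw [div_pow, show (l+4)^(2*n+3) = (l+4)^(2*n+2) * (l+4) from pow_succ _ _]
        field_simp; norm_num
    _ ≤ rr n κ θ l * ‖qq Q x k z‖ * ‖1+z‖^(2*n+3) := by
        have : M / (2 * (l+4)) ≤ ‖qq Q x k z‖ := by
          refine le_trans ?_ h1
          apply div_le_div_of_nonneg_left hM.le (by positivity)
          linarith
        rw [show θ / (36 * κ^2 * (l+4)^(2*n+2)) = rr n κ θ l from rfl]
        gcongr

end Part7

section Part8
variable {n : ℕ} {ρ κ : ℝ} {N : ℕ} {Q b : ℝ[X]} {x : Fin N → ℝ} {M : ℝ}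

/-- logarithmic derivative -/
def LD (f : ℂ → ℂ) (l z : ℂ) : Prop := f z ≠ 0 ∧ HasDerivAt f (f z * l) z

lemma LD.mul {f g : ℂ → ℂ} {l l' z : ℂ} (hf : LD f l z) (hg : LD g l' z) :
    LD (fun z => f z * g z) (l + l') z :=
  ⟨mul_ne_zero hf.1 hg.1, (hf.2.mul hg.2).congr_deriv (by ring)⟩

lemma LD.inv {f : ℂ → ℂ} {l z : ℂ} (hf : LD f l z) : LD (fun z => (f z)⁻¹) (-l) z :=
  ⟨inv_ne_zero hf.1, (hf.2.inv hf.1).congr_deriv (by have := hf.1; field_simp)⟩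

lemma LD.pow {f : ℂ → ℂ} {l z : ℂ} (hf : LD f l z) (m : ℕ) : LD (fun z => f z ^ m) (m * l) z := by
  induction m with
  | zero => refine ⟨by simp, ?_⟩; simp only [pow_zero, Nat.cast_zero, zero_mul, mul_zero]; exact hasDerivAt_const _ _
  | succ m ih =>
    have := ih.mul hf
    simp only [pow_succ]
    convert this using 1
    push_cast; ring

lemma LD.exp {g : ℂ → ℂ} {l z : ℂ} (hg : HasDerivAt g l z) : LD (fun z => exp (g z)) l z :=
  ⟨exp_ne_zero _, hg.cexp⟩

lemma LD.prod {ι : Type*} (s : Finset ι) {f : ι → ℂ → ℂ} {l : ι → ℂ} {z : ℂ} (h : ∀ i ∈ s, LD (f i) (l i) z) :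
    LD (fun z => ∏ i ∈ s, f i z) (∑ i ∈ s, l i) z := by
  classical
  induction s using Finset.induction_on with
  | empty => refine ⟨by simp, ?_⟩; simp only [Finset.prod_empty, Finset.sum_empty, mul_zero]; exact hasDerivAt_const _ _
  | insert a s ha ih =>
    simp only [Finset.prod_insert ha, Finset.sum_insert ha]
    exact (h a (Finset.mem_insert_self _ _)).mul (ih fun i hi => h i (Finset.mem_insert_of_mem hi))

lemma radial {f : ℂ → ℂ} {l z : ℂ} (h : LD f l z) (hneg : (z * l).re < 0) :
    ∀ᶠ s : ℝ in nhdsWithin 1 (Set.Iio 1), ‖f z‖ < ‖f (s * z)‖ := by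
  have hd : HasDerivAt (fun s : ℝ => (f (s * z) / f z).re) ((z*l).re) 1 := by
    have h1 : HasDerivAt (fun s : ℂ => f (s * z) / f z) (z*l) ((1:ℝ):ℂ) := by
      have h2 : HasDerivAt (fun s : ℂ => s * z) z ((1:ℝ):ℂ) := by
        simpa using (hasDerivAt_id ((1:ℝ):ℂ)).mul_const z
      have h3 : HasDerivAt f (f z * l) (((1:ℝ):ℂ) * z) := by simpa using h.2
      have := (h3.comp ((1:ℝ):ℂ) h2).div_const (f z)
      refine this.congr_deriv ?_
      have := h.1
      field_simp
    exact h1.real_of_complex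
  rw [hasDerivAt_iff_tendsto_slope_left_right] at hd
  filter_upwards [hd.1.eventually (gt_mem_nhds hneg), self_mem_nhdsWithin] with s hs hs1
  have hs1 : s < 1 := hs1
  have hp : 0 < ‖f z‖ := norm_pos_iff.mpr h.1
  rw [slope_def_field] at hs
  have hgt : 1 < (f (s * z) / f z).re := by
    by_contra hc
    push Not at hc
    have e : (f (((1:ℝ):ℂ) * z) / f z).re = 1 := by
      simp [div_self h.1]
    rw [e] at hs
    have : 0 ≤ ((f (s * z) / f z).re - 1) / (s - 1) := div_nonneg_of_nonpos (by linarith) (by linarith)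
    linarith
  have := hgt.trans_le (re_le_norm _)
  rw [norm_div, lt_div_iff₀ hp] at this
  linarith

noncomputable def hh2 (ρ : ℝ) (ζ : ℂ) : ℂ := 2 * ((ρ+1:ℝ):ℂ) * (AA ρ ζ)⁻¹ - 1
noncomputable def tau (ρ : ℝ) : ℝ := 2*ρ/(ρ^2+1)

/-- comparison function -/
noncomputable def GG {N : ℕ} (m : ℕ) (ρ : ℝ) (b : ℝ[X]) (x : Fin N → ℝ) (ζ : ℂ) : ℂ :=
  ζ^m * (ff ρ b x ζ * (AA ρ ζ ^ (4*m) * exp (((2*m*tau ρ : ℝ):ℂ) * hh2 ρ ζ)))⁻¹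

lemma LD_ff {ζ : ℂ} (hne : ∀ k, fa ρ x k ζ ≠ 0) :
    LD (ff ρ b x) (∑ k, (((ρ^2 - x k : ℝ) : ℂ) + ((ρ^2-1 : ℝ) : ℂ) * ζ) / fa ρ x k ζ + 2 * aeval ζ (derivative b)) ζ := by
  refine LD.mul (LD.prod _ fun k _ => ⟨hne k, ?_⟩) (LD.exp ((aeval_hasDerivAt b ζ).const_mul 2))
  have : HasDerivAt (fa ρ x k) (1 * ((ρ^2 - x k : ℝ) : ℂ) + (((ρ^2-1)/2 : ℝ) : ℂ) * (2 * ζ ^ 1)) ζ :=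
    ((hasDerivAt_id ζ).mul_const _).add (((hasDerivAt_pow 2 ζ).add_const 1).const_mul _)
  refine this.congr_deriv ?_
  rw [mul_div_cancel₀ _ (hne k)]
  push_cast; ring

lemma AA_hasDerivAt (ζ : ℂ) : HasDerivAt (AA ρ) ((ρ-1:ℝ):ℂ) ζ := by
  exact (((hasDerivAt_id ζ).const_mul ((ρ-1:ℝ):ℂ)).const_add ((ρ+1:ℝ):ℂ)).congr_deriv (by ring)

lemma hh2_hasDerivAt {ζ : ℂ} (h : AA ρ ζ ≠ 0) :
    HasDerivAt (hh2 ρ) (- (2 * ((ρ+1:ℝ):ℂ) * ((ρ-1:ℝ):ℂ)) / AA ρ ζ^2) ζ := by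
  refine ((((AA_hasDerivAt ζ).inv h).const_mul (2 * ((ρ+1:ℝ):ℂ))).sub_const 1).congr_deriv ?_
  ring

lemma LD_GG (m : ℕ) {ζ : ℂ} (h0 : ζ ≠ 0) (hA : AA ρ ζ ≠ 0) (hne : ∀ k, fa ρ x k ζ ≠ 0) :
    LD (GG m ρ b x) (m * (1/ζ) + -((∑ k, (((ρ^2 - x k : ℝ) : ℂ) + ((ρ^2-1 : ℝ) : ℂ) * ζ) / fa ρ x k ζ + 2 * aeval ζ (derivative b))
      + (((4*m : ℕ):ℂ) * (((ρ-1:ℝ):ℂ) / AA ρ ζ) + ((2*m*tau ρ : ℝ):ℂ) * (- (2 * ((ρ+1:ℝ):ℂ) * ((ρ-1:ℝ):ℂ)) / AA ρ ζ^2)))) ζ := by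
  have l1 : LD (fun z => z) (1/ζ) ζ := ⟨h0, by rw [mul_one_div_cancel h0]; exact hasDerivAt_id' ζ⟩
  have l2 : LD (AA ρ) (((ρ-1:ℝ):ℂ) / AA ρ ζ) ζ := ⟨hA, by rw [mul_div_cancel₀ _ hA]; exact AA_hasDerivAt ζ⟩
  exact (l1.pow m).mul (((LD_ff hne).mul ((l2.pow (4*m)).mul (LD.exp ((hh2_hasDerivAt hA).const_mul _)))).inv)

lemma re_part1 {ζ : ℂ} (h : ‖ζ‖ = 1) (k : Fin N) (hne : fa ρ x k ζ ≠ 0) :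
    (ζ * ((((ρ^2 - x k : ℝ) : ℂ) + ((ρ^2-1 : ℝ) : ℂ) * ζ) / fa ρ x k ζ)).re = 1 := by
  have h0 : ζ ≠ 0 := by rintro rfl; simp at h
  have e := fa_eq ρ x k h0
  rw [J_circle ρ h, ← ofReal_sub] at e
  have hT : ((ρ^2 + (ρ^2-1) * ζ.re - x k : ℝ):ℂ) ≠ 0 := by
    intro h'; rw [h'] at e; simp at e; exact hne e
  have hT' : (ρ^2 + (ρ^2-1) * ζ.re - x k) ≠ 0 := by exact_mod_cast hT
  rw [e, ← mul_div_assoc, mul_div_mul_left _ _ h0, div_ofReal_re, add_re, ofReal_re, re_ofReal_mul]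
  rw [div_eq_one_iff_eq hT']; ring

lemma re_part2 {ζ : ℂ} (hP : Pot n ρ κ N Q b) (h : ‖ζ‖ = 1) {t : ℝ} (ht : t = ρ^2 + (ρ^2-1) * ζ.re) :
    (ζ * (2 * aeval ζ (derivative b))).re = - N + (κ/ρ) * t^(n-1) * (t-1) * (2*ρ^2-1-t) := by
  have h0 : ζ ≠ 0 := by rintro rfl; simp at h
  have hE := hP.hE ζ h0
  rw [inv_of_circle h, aeval_conj_real, ← map_mul, J_circle ρ h, ← ht] at hE
  have h1 := congrArg re hE
  rw [sub_re, sub_re, conj_re] at h1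
  have e : (((κ/ρ : ℝ) : ℂ) * (t:ℂ)^(n-1) * ((t:ℂ) - 1) * ((t:ℂ) - (2*ρ^2-1))) =
    (((κ/ρ) * t^(n-1) * (t-1) * (t - (2*ρ^2-1)) : ℝ):ℂ) := by push_cast; ring
  rw [e, ofReal_re] at h1
  have e2 : (ζ * (2 * aeval ζ (derivative b))).re = 2 * (ζ * aeval ζ (derivative b)).re := by
    rw [mul_left_comm]; simp
  rw [e2]
  simp only [neg_re, natCast_re] at h1
  linarith

lemma re_part3 (hρ : 10 ≤ ρ) {ζ : ℂ} (h : ‖ζ‖ = 1) {t : ℝ} (ht : t = ρ^2 + (ρ^2-1) * ζ.re) :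
    (ζ * (((ρ-1:ℝ):ℂ) / AA ρ ζ)).re = 1/2 * (1 - 2*ρ/(1+t)) := by
  have hA := AA_circle ρ h
  rw [← ht] at hA
  have hA0 := AA_low hρ h.le
  have ht0 : 0 < 1+t := by nlinarith
  have hs : ζ.re^2 + ζ.im^2 = 1 := by
    have := Complex.sq_norm ζ
    rw [h, normSq_apply] at this; nlinarith
  rw [← mul_div_assoc, div_re, normSq_eq_norm_sq, hA]
  simp only [AA, add_re, add_im, mul_re, mul_im, ofReal_re, ofReal_im]
  have e : ζ.re * (ρ-1) - ζ.im * 0 = ζ.re * (ρ-1) := by ring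
  field_simp
  rw [ht]
  linear_combination (ρ-1)^2 * hs

lemma re_part4 (hρ : 10 ≤ ρ) {ζ : ℂ} (h : ‖ζ‖ = 1) {t : ℝ} (ht : t = ρ^2 + (ρ^2-1) * ζ.re) :
    (ζ * (- (2 * ((ρ+1:ℝ):ℂ) * ((ρ-1:ℝ):ℂ)) / AA ρ ζ^2)).re = -(ρ^2+1)/(1+t) + 4*ρ^2/(1+t)^2 := by
  have hA := AA_circle ρ h
  rw [← ht] at hA
  have hA0 := AA_low hρ h.le
  have ht0 : 0 < 1+t := by nlinarith
  have hs : ζ * (starRingEnd ℂ) ζ = 1 := by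
    rw [Complex.mul_conj, normSq_eq_norm_sq, h]; simp
  have hAA : AA ρ ζ * (starRingEnd ℂ) (AA ρ ζ) = ((2 * (1+t) : ℝ):ℂ) := by
    rw [Complex.mul_conj, normSq_eq_norm_sq, hA]
  have hAne := AA_ne hρ h.le
  have hc : (starRingEnd ℂ) (AA ρ ζ) ≠ 0 := by simpa using hAne
  have e : ζ * (- (2 * ((ρ+1:ℝ):ℂ) * ((ρ-1:ℝ):ℂ)) / AA ρ ζ^2) =
     (- (2 * ((ρ+1:ℝ):ℂ) * ((ρ-1:ℝ):ℂ)) * (((ρ+1:ℝ):ℂ)^2 * ζ + 2 * ((ρ+1:ℝ):ℂ) * ((ρ-1:ℝ):ℂ) + ((ρ-1:ℝ):ℂ)^2 * (starRingEnd ℂ) ζ)) / (((2 * (1+t))^2 : ℝ):ℂ) := by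
    rw [ofReal_pow, ← hAA, mul_pow]
    have : ζ * (starRingEnd ℂ) (AA ρ ζ)^2 = (((ρ+1:ℝ):ℂ)^2 * ζ + 2 * ((ρ+1:ℝ):ℂ) * ((ρ-1:ℝ):ℂ) + ((ρ-1:ℝ):ℂ)^2 * (starRingEnd ℂ) ζ) := by
      simp only [AA, map_add, map_mul, conj_ofReal]
      linear_combination (2 * ((ρ+1:ℝ):ℂ) * ((ρ-1:ℝ):ℂ) + ((ρ-1:ℝ):ℂ)^2 * (starRingEnd ℂ) ζ) * hs
    rw [← this]
    field_simp
  rw [e, div_ofReal_re]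
  have e2 : (- (2 * ((ρ+1:ℝ):ℂ) * ((ρ-1:ℝ):ℂ)) * (((ρ+1:ℝ):ℂ)^2 * ζ + 2 * ((ρ+1:ℝ):ℂ) * ((ρ-1:ℝ):ℂ) + ((ρ-1:ℝ):ℂ)^2 * (starRingEnd ℂ) ζ)).re =
      - (2 * (ρ+1) * (ρ-1)) * ((ρ+1)^2 * ζ.re + 2 * (ρ+1)*(ρ-1) + (ρ-1)^2 * ζ.re) := by
    have : - (2 * ((ρ+1:ℝ):ℂ) * ((ρ-1:ℝ):ℂ)) = ((- (2 * (ρ+1) * (ρ-1)) : ℝ):ℂ) := by push_cast; ring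
    rw [this, re_ofReal_mul, add_re, add_re, ← ofReal_pow, ← ofReal_pow, re_ofReal_mul, re_ofReal_mul, conj_re]
    have : 2 * ((ρ+1:ℝ):ℂ) * ((ρ-1:ℝ):ℂ) = ((2 * (ρ+1) * (ρ-1) : ℝ):ℂ) := by push_cast; ring
    rw [this, ofReal_re]
  rw [e2]
  field_simp
  rw [ht]; ring

lemma radial_neg (hP : Pot n ρ κ N Q b) {m : ℕ} (hm : 1 ≤ m) (hκm : (m:ℝ) ≤ κ) {ζ : ℂ} (h : ‖ζ‖ = 1)
    (hne : ∀ k, fa ρ x k ζ ≠ 0) :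
    (ζ * (m * (1/ζ) + -((∑ k, (((ρ^2 - x k : ℝ) : ℂ) + ((ρ^2-1 : ℝ) : ℂ) * ζ) / fa ρ x k ζ + 2 * aeval ζ (derivative b))
      + (((4*m : ℕ):ℂ) * (((ρ-1:ℝ):ℂ) / AA ρ ζ) + ((2*m*tau ρ : ℝ):ℂ) * (- (2 * ((ρ+1:ℝ):ℂ) * ((ρ-1:ℝ):ℂ)) / AA ρ ζ^2))))).re < 0 := by
  have hρ := hP.hρ
  have hm' : (1:ℝ) ≤ m := by exact_mod_cast hm
  have h0 : ζ ≠ 0 := by rintro rfl; simp at h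
  obtain ⟨t, ht⟩ : ∃ t, t = ρ^2 + (ρ^2-1) * ζ.re := ⟨_, rfl⟩
  have p2 := re_part2 hP h ht
  have p3 := re_part3 hρ h ht
  have p4 := re_part4 hρ h ht
  have p1 : (ζ * ∑ k, (((ρ^2 - x k : ℝ) : ℂ) + ((ρ^2-1 : ℝ) : ℂ) * ζ) / fa ρ x k ζ).re = N := by
    rw [Finset.mul_sum, re_sum, Finset.sum_congr rfl fun k _ => re_part1 h k (hne k)]; simp
  set S := ∑ k, (((ρ^2 - x k : ℝ) : ℂ) + ((ρ^2-1 : ℝ) : ℂ) * ζ) / fa ρ x k ζ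
  set B := 2 * aeval ζ (derivative b)
  set U := (((ρ-1:ℝ):ℂ) / AA ρ ζ)
  set V := (- (2 * ((ρ+1:ℝ):ℂ) * ((ρ-1:ℝ):ℂ)) / AA ρ ζ^2)
  have e : ζ * (m * (1/ζ) + -((S + B) + (((4*m : ℕ):ℂ) * U + ((2*m*tau ρ : ℝ):ℂ) * V))) =
      ((m:ℝ):ℂ) - (ζ * S + ζ * B + (((4*m : ℝ):ℂ) * (ζ * U) + ((2*m*tau ρ : ℝ):ℂ) * (ζ * V))) := by
    field_simp; push_cast; ring
  rw [e, sub_re, add_re, add_re, add_re, re_ofReal_mul, re_ofReal_mul, ofReal_re, p1, p2, p3, p4]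
  have hre := abs_re_le_one h
  have ht1 : 1 ≤ t := by
    rw [ht]; nlinarith [mul_nonneg (show 0 ≤ ρ^2-1 by nlinarith) (show 0 ≤ 1 + ζ.re by linarith)]
  have htR : t ≤ 2*ρ^2-1 := by
    rw [ht]; nlinarith [mul_nonneg (show 0 ≤ ρ^2-1 by nlinarith) (show 0 ≤ 1 - ζ.re by linarith)]
  have hX : 0 ≤ (t-1)*(2*ρ^2-1-t) := mul_nonneg (by linarith) (by linarith)
  have hpow : 1 ≤ t^(n-1) := one_le_pow₀ ht1
  have hK : (m/ρ) * ((t-1)*(2*ρ^2-1-t)) ≤ (κ/ρ) * t^(n-1) * (t-1) * (2*ρ^2-1-t) := by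
    calc _ = (m/ρ) * 1 * ((t-1)*(2*ρ^2-1-t)) := by ring
      _ ≤ (κ/ρ) * t^(n-1) * ((t-1)*(2*ρ^2-1-t)) := by
        have : 0 ≤ κ := hP.hκ.le
        gcongr
      _ = _ := by ring
  set X := (t-1)*(2*ρ^2-1-t) with hXd
  have hu : 0 < 1+t := by linarith
  have hτ : tau ρ ≤ 1/4 := by
    rw [tau, div_le_iff₀ (by positivity)]; nlinarith
  have hτ2 : 2 * tau ρ / (1+t)^2 ≤ 1/ρ := by
    rw [tau, div_le_div_iff₀ (by positivity) (by positivity)]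
    rw [mul_div_assoc', div_mul_eq_mul_div, div_le_iff₀ (by positivity)]
    nlinarith [mul_nonneg (show 0 ≤ t - 1 by linarith) (show 0 ≤ t+3 by linarith), sq_nonneg ρ,
      mul_nonneg (mul_nonneg (show 0 ≤ t - 1 by linarith) (show 0 ≤ t+3 by linarith)) (sq_nonneg ρ)]
  have hid : 4*m * (1/2 * (1 - 2*ρ/(1+t))) + 2*m*tau ρ * (-(ρ^2+1)/(1+t) + 4*ρ^2/(1+t)^2) =
      2*m - 2*m*tau ρ - m * X * (2*tau ρ/(1+t)^2) := by
    rw [tau, hXd]; field_simp; ring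
  have hfin : m * X * (2*tau ρ/(1+t)^2) ≤ (m/ρ) * X := by
    calc _ ≤ m * X * (1/ρ) := by gcongr
      _ = _ := by ring
  nlinarith

end Part8

section Part9
variable {n : ℕ} {ρ κ : ℝ} {N : ℕ} {Q b : ℝ[X]} {x : Fin N → ℝ} {M : ℝ}

lemma norm_GG (hP : Pot n ρ κ N Q b) (x : Fin N → ℝ) (m : ℕ) {ζ : ℂ} (h : ζ ≠ 0) :
    ‖GG m ρ b x ζ‖ = ‖ζ‖^m / (‖ww Q x (J ρ ζ)‖ * Real.exp (- phi N b ζ) *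
      (‖AA ρ ζ‖^(4*m) * Real.exp (2*m*tau ρ * (hh2 ρ ζ).re))) := by
  rw [GG, norm_mul, norm_pow, norm_inv, norm_mul, norm_mul, norm_pow, Complex.norm_exp, norm_ff hP x h,
    re_ofReal_mul, div_eq_mul_inv]

lemma hh2_re (hρ : 10 ≤ ρ) {ζ : ℂ} (h : ‖ζ‖ ≤ 1) : 0 ≤ (hh2 ρ ζ).re := by
  have hA := AA_ne hρ h
  have hA2 := AA_low hρ h
  have hn : ζ.re^2 + ζ.im^2 ≤ 1 := by
    have := Complex.sq_norm ζ
    rw [normSq_apply] at this; nlinarith [norm_nonneg ζ]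
  have e : hh2 ρ ζ = (2 * ((ρ+1:ℝ):ℂ) - AA ρ ζ) / AA ρ ζ := by
    rw [hh2]; field_simp
  have hp : 0 < normSq (AA ρ ζ) := normSq_pos.mpr hA
  rw [e, div_re, ← add_div]
  apply div_nonneg _ hp.le
  simp only [AA, add_re, add_im, mul_re, mul_im, ofReal_re, ofReal_im, sub_re, sub_im, re_ofNat, im_ofNat]
  nlinarith [mul_nonneg (sq_nonneg (ρ-1)) (sub_nonneg.mpr hn)]

lemma hh2_upp (hρ : 10 ≤ ρ) {ζ : ℂ} (h : ‖ζ‖ ≤ 1) : tau ρ * (hh2 ρ ζ).re ≤ 4 := by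
  have hA := AA_ne hρ h
  have hA2 := AA_low hρ h
  have h1 : (hh2 ρ ζ).re ≤ ρ + 2 := by
    refine (re_le_norm _).trans ?_
    rw [hh2]
    refine (norm_sub_le _ _).trans ?_
    rw [norm_mul, norm_mul, Complex.norm_real, Real.norm_eq_abs, abs_of_nonneg (by linarith), norm_inv]
    have : ‖AA ρ ζ‖⁻¹ ≤ 1/2 := by
      rw [one_div]; exact inv_anti₀ (by norm_num) hA2
    simp only [norm_ofNat, norm_one]
    nlinarith
  have h0 : 0 ≤ tau ρ := by unfold tau; positivity
  calc _ ≤ tau ρ * (ρ+2) := by gcongr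
    _ ≤ 4 := by rw [tau, div_mul_eq_mul_div, div_le_iff₀ (by positivity)]; nlinarith

lemma one_add_le (hρ : 10 ≤ ρ) {ζ : ℂ} (h0 : ζ ≠ 0) (h : ‖ζ‖ ≤ 1) : ‖1 + J ρ ζ‖ * ‖ζ‖ ≤ ‖AA ρ ζ‖^2 / 2 := by
  have e : 2 * ((1 + J ρ ζ) * ζ) = AA ρ ζ * (((ρ+1:ℝ):ℂ) * ζ + ((ρ-1:ℝ):ℂ)) := by
    rw [← mul_assoc, ← AA_mul ρ h0, mul_assoc]
    congr 1
    rw [AA]; field_simp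
  have e2 := congrArg norm e
  rw [norm_mul, norm_mul, norm_mul] at e2
  have hn : ζ.re^2 + ζ.im^2 ≤ 1 := by
    have := Complex.sq_norm ζ
    rw [normSq_apply] at this; nlinarith [norm_nonneg ζ]
  have h3 : ‖((ρ+1:ℝ):ℂ) * ζ + ((ρ-1:ℝ):ℂ)‖ ≤ ‖AA ρ ζ‖ := by
    apply le_of_sq_le_sq _ (norm_nonneg _)
    rw [Complex.sq_norm, Complex.sq_norm, normSq_apply, normSq_apply]
    simp only [AA, add_re, add_im, mul_re, mul_im, ofReal_re, ofReal_im]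
    nlinarith
  simp only [norm_ofNat] at e2
  nlinarith [norm_nonneg (AA ρ ζ)]

lemma inv_norm_le (hρ : 10 ≤ ρ) {ζ : ℂ} (h0 : ζ ≠ 0) (h : ‖ζ‖ ≤ 1) : 1 ≤ ‖ζ‖ * (‖J ρ ζ‖ + 4) := by
  have e : (((ρ^2-1)/2 : ℝ):ℂ) = ζ * (J ρ ζ - ((ρ^2:ℝ):ℂ)) - (((ρ^2-1)/2 : ℝ):ℂ) * ζ^2 := by
    rw [J]; field_simp; ring
  have hh : 0 ≤ (ρ^2-1)/2 := by nlinarith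
  have e2 := congrArg norm e
  rw [Complex.norm_real, Real.norm_eq_abs, abs_of_nonneg hh] at e2
  have h1 := norm_sub_le (ζ * (J ρ ζ - ((ρ^2:ℝ):ℂ))) ((((ρ^2-1)/2 : ℝ):ℂ) * ζ^2)
  rw [← e2, norm_mul, norm_mul, norm_pow, Complex.norm_real, Real.norm_eq_abs, abs_of_nonneg hh] at h1
  have h2 := norm_sub_le (J ρ ζ) ((ρ^2:ℝ):ℂ)
  rw [Complex.norm_real, Real.norm_eq_abs, abs_of_nonneg (by positivity)] at h2
  have hn := norm_pos_iff.mpr h0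
  have h3 : (ρ^2-1)/2 ≤ ‖ζ‖ * (‖J ρ ζ‖ + ρ^2 + (ρ^2-1)/2) := by
    nlinarith [mul_le_mul_of_nonneg_left h2 hn.le, mul_nonneg hh (mul_nonneg hn.le (sub_nonneg.mpr h))]
  have h4 : ‖J ρ ζ‖ + ρ^2 + (ρ^2-1)/2 ≤ (ρ^2-1)/2 * (‖J ρ ζ‖ + 4) := by
    nlinarith [norm_nonneg (J ρ ζ), mul_nonneg (norm_nonneg (J ρ ζ)) (show 0 ≤ ρ^2-3 by nlinarith)]
  have h5 : (ρ^2-1)/2 * 1 ≤ (ρ^2-1)/2 * (‖ζ‖ * (‖J ρ ζ‖ + 4)) := by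
    calc _ ≤ ‖ζ‖ * (‖J ρ ζ‖ + ρ^2 + (ρ^2-1)/2) := by linarith
      _ ≤ ‖ζ‖ * ((ρ^2-1)/2 * (‖J ρ ζ‖ + 4)) := by gcongr
      _ = _ := by ring
  exact le_of_mul_le_mul_left h5 (by nlinarith)

/-- frontier case (a) -/
lemma caseA (hF : Fek n ρ κ N Q b x M) (hκ : 1 ≤ κ) {θ : ℝ} (hθ : 0 < θ) (hθ1 : θ ≤ 1)
    {ζ : ℂ} (h0 : ζ ≠ 0) (h1 : ‖ζ‖ ≤ 1) (k : Fin N) (hk : ‖J ρ ζ - x k‖ = rr n κ θ (x k)) :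
    ‖GG (2*n+3) ρ b x ζ‖ * (θ * M / (72 * κ^2 * 8^(2*n+3))) ≤ 3 := by
  have hρ := hF.pot.hρ
  have hM := hF.hM
  have hl := hF.hx k
  obtain ⟨s1, s2, s3⟩ := rr_le (n := n) hκ hθ hθ1 hl
  have hw := ww_low hF hκ k hθ hθ1 hk
  set m := 2*n+3 with hm
  rw [norm_GG hF.pot x m h0]
  set z := J ρ ζ with hz
  have hc0 : 0 < θ * M / (72 * κ^2 * 8^m) := by positivity
  set c0 := θ * M / (72 * κ^2 * 8^m)
  have hwpos : 0 < ‖ww Q x z‖ := by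
    by_contra hcon
    have : ‖ww Q x z‖ = 0 := le_antisymm (not_lt.mp hcon) (norm_nonneg _)
    rw [this] at hw; linarith
  -- phi bound
  obtain ⟨ζ', h0', h1', hJ'⟩ := exists_zeta hρ (x k:ℂ)
  have hl' : ‖(x k:ℂ)‖ = x k := by rw [Complex.norm_real, Real.norm_eq_abs, abs_of_nonneg hl]
  have hzn : ‖z‖ ≤ x k + 1 := by
    have := norm_le_norm_add_norm_sub' z (x k:ℂ)
    rw [hl', hk] at this; linarith
  have lip := phi_lip hF.pot h0 h0' h1 h1' (by rw [hJ']; simp) (K := x k+1) hzn (by rw [hJ', hl']; linarith)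
  have neg := phi_nonpos hF.pot h0' h1' hl hJ'
  rw [hJ', hk, show x k + 1 + 2 = x k + 3 by ring] at lip
  have hphi : phi N b ζ ≤ 1 := by linarith [le_abs_self (phi N b ζ - phi N b ζ')]
  have hephi : Real.exp (-1) ≤ Real.exp (- phi N b ζ) := Real.exp_le_exp.mpr (by linarith)
  have he : 1 ≤ 3 * Real.exp (-1) := by
    have : Real.exp 1 ≤ 3 := by linarith [Real.exp_one_lt_d9]
    have e : Real.exp 1 * Real.exp (-1) = 1 := by rw [← Real.exp_add]; simp
    nlinarith [Real.exp_pos (-1)]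
  have hA := AA_low hρ h1
  have hA1 := one_add_le hρ h0 h1
  have hApos : 0 < ‖AA ρ ζ‖ := by linarith
  have hpow : (‖1+z‖ * ‖ζ‖)^m ≤ ‖AA ρ ζ‖^(4*m) := by
    rw [show 4*m = 4*m from rfl, pow_mul]
    gcongr
    rw [hz]
    refine hA1.trans ?_
    have h2 : 4 ≤ ‖AA ρ ζ‖^2 := by nlinarith
    rw [show ‖AA ρ ζ‖^4 = (‖AA ρ ζ‖^2)^2 by ring]
    nlinarith [h2]
  have hτ : 0 ≤ tau ρ := by unfold tau; positivity
  have hex : 1 ≤ Real.exp (2*m*tau ρ * (hh2 ρ ζ).re) := by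
    apply Real.one_le_exp
    have := hh2_re hρ h1
    positivity
  have hD : 0 < ‖ww Q x z‖ * Real.exp (- phi N b ζ) * (‖AA ρ ζ‖^(4*m) * Real.exp (2*m*tau ρ * (hh2 ρ ζ).re)) := by
    positivity
  rw [div_mul_eq_mul_div, div_le_iff₀ hD]
  calc ‖ζ‖^m * c0 ≤ ‖ζ‖^m * (‖ww Q x z‖ * ‖1+z‖^m) := by gcongr
    _ = ‖ww Q x z‖ * 1 * ((‖1+z‖ * ‖ζ‖)^m * 1) := by rw [mul_pow]; ring
    _ ≤ ‖ww Q x z‖ * (3 * Real.exp (- phi N b ζ)) * (‖AA ρ ζ‖^(4*m) * Real.exp (2*m*tau ρ * (hh2 ρ ζ).re)) := by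
      gcongr
      linarith
    _ = _ := by ring

lemma GG_bound (hF : Fek n ρ κ N Q b x M) (hκ : 2*n+3 ≤ κ) {θ : ℝ} (hθ : 0 < θ) (hθ1 : θ ≤ 1)
    {ζ : ℂ} (h1 : ‖ζ‖ < 1) (hk : ∀ k, rr n κ θ (x k) * ‖ζ‖ < ‖fa ρ x k ζ‖) :
    ‖GG (2*n+3) ρ b x ζ‖ * (θ * M / (72 * κ^2 * 8^(2*n+3))) ≤ 3 := by
  have hρ := hF.pot.hρ
  have hM := hF.hM
  have hκ1 : 1 ≤ κ := by
    have : (0:ℝ) ≤ n := by positivity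
    linarith
  have hc0 : 0 < θ * M / (72 * κ^2 * 8^(2*n+3)) := by positivity
  set U : Set ℂ := {ζ | ‖ζ‖ < 1 ∧ ∀ k, rr n κ θ (x k) * ‖ζ‖ < ‖fa ρ x k ζ‖} with hU
  have hfc : ∀ k, Continuous (fa ρ x k) := fun k => (fa_diff ρ x k).continuous
  have hUopen : IsOpen U := by
    rw [hU, Set.ofPred_and, Set.ofPred_forall]
    refine (isOpen_lt continuous_norm continuous_const).inter (isOpen_iInter_of_finite fun k => ?_)
    exact isOpen_lt (continuous_const.mul continuous_norm) (hfc k).norm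
  have hcl : ∀ z ∈ closure U, ‖z‖ ≤ 1 ∧ ∀ k, rr n κ θ (x k) * ‖z‖ ≤ ‖fa ρ x k z‖ := by
    intro z hz
    have hC : IsClosed {ζ : ℂ | ‖ζ‖ ≤ 1 ∧ ∀ k, rr n κ θ (x k) * ‖ζ‖ ≤ ‖fa ρ x k ζ‖} := by
      rw [Set.ofPred_and, Set.ofPred_forall]
      refine (isClosed_le continuous_norm continuous_const).inter (isClosed_iInter fun k => ?_)
      exact isClosed_le (continuous_const.mul continuous_norm) (hfc k).norm
    have hsub : U ⊆ {ζ : ℂ | ‖ζ‖ ≤ 1 ∧ ∀ k, rr n κ θ (x k) * ‖ζ‖ ≤ ‖fa ρ x k ζ‖} :=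
      fun y hy => ⟨hy.1.le, fun k => (hy.2 k).le⟩
    exact closure_minimal hsub hC hz
  have hfa0 : ∀ k, fa ρ x k 0 ≠ 0 := by
    intro k
    have : (((ρ^2-1)/2 : ℝ):ℂ) ≠ 0 := by
      have : (ρ^2-1)/2 ≠ 0 := by nlinarith
      exact_mod_cast this
    simpa [fa] using this
  have hne : ∀ z ∈ closure U, ∀ k, fa ρ x k z ≠ 0 := by
    intro z hz k h
    have h2 := (hcl z hz).2 k
    rw [h, norm_zero] at h2
    have hr := rr_pos (n := n) hκ1 hθ (hF.hx k)
    have : z = 0 := by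
      rw [← norm_eq_zero]
      nlinarith [norm_nonneg z]
    rw [this] at h
    exact hfa0 k h
  have hbd : Bornology.IsBounded U := by
    have hs : U ⊆ Metric.ball (0:ℂ) 1 := fun y hy => by simpa using hy.1
    exact Metric.isBounded_ball.subset hs
  have hdiff : DiffContOnCl ℂ (GG (2*n+3) ρ b x) U := by
    apply DifferentiableOn.diffContOnCl
    intro z hz
    have hA := AA_ne hρ (hcl z hz).1
    have hff : ff ρ b x z ≠ 0 := by
      rw [ff]; exact mul_ne_zero (Finset.prod_ne_zero_iff.mpr fun k _ => hne z hz k) (exp_ne_zero _)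
    have d1 := (hh2_hasDerivAt hA).differentiableAt
    have d2 := ff_diff ρ b x z
    have d3 := AA_diff ρ z
    have : DifferentiableAt ℂ (GG (2*n+3) ρ b x) z := by
      unfold GG
      refine (differentiableAt_id.pow _).mul (DifferentiableAt.inv (d2.mul ((d3.pow _).mul (d1.const_mul _).cexp)) ?_)
      exact mul_ne_zero hff (mul_ne_zero (pow_ne_zero _ hA) (exp_ne_zero _))
    exact this.differentiableWithinAt
  obtain ⟨ζ₀, hfr, hmax⟩ := Complex.exists_mem_frontier_isMaxOn_norm hbd ⟨ζ, h1, hk⟩ hdiff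
  have hmax' : ∀ y ∈ closure U, ‖GG (2*n+3) ρ b x y‖ ≤ ‖GG (2*n+3) ρ b x ζ₀‖ := fun y hy => hmax hy
  have hle : ‖GG (2*n+3) ρ b x ζ‖ ≤ ‖GG (2*n+3) ρ b x ζ₀‖ := hmax' _ (subset_closure ⟨h1, hk⟩)
  refine (mul_le_mul_of_nonneg_right hle hc0.le).trans ?_
  have hcl0 : ζ₀ ∈ closure U := frontier_subset_closure hfr
  obtain ⟨c1, c2⟩ := hcl _ hcl0
  have hnotU : ζ₀ ∉ U := by
    rw [hUopen.frontier_eq] at hfr; exact hfr.2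
  by_cases hex : ∃ k, ‖fa ρ x k ζ₀‖ = rr n κ θ (x k) * ‖ζ₀‖
  · obtain ⟨k, hk⟩ := hex
    have h0 : ζ₀ ≠ 0 := by
      rintro rfl
      rw [norm_zero, mul_zero, norm_eq_zero] at hk
      exact hfa0 k hk
    refine caseA hF hκ1 hθ hθ1 h0 c1 k ?_
    rw [fa_eq ρ x k h0, norm_mul, mul_comm] at hk
    exact mul_right_cancel₀ (norm_ne_zero_iff.mpr h0) hk
  · push Not at hex
    have hstrict : ∀ k, rr n κ θ (x k) * ‖ζ₀‖ < ‖fa ρ x k ζ₀‖ := fun k => lt_of_le_of_ne (c2 k) (hex k).symm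
    have hc : ‖ζ₀‖ = 1 := by
      by_contra h
      exact hnotU ⟨lt_of_le_of_ne c1 h, hstrict⟩
    exfalso
    have h0 : ζ₀ ≠ 0 := by rintro rfl; simp at hc
    have hrad := radial (LD_GG (b := b) (2*n+3) h0 (AA_ne hρ c1) (hne ζ₀ hcl0))
      (radial_neg hF.pot (by omega) (by push_cast; exact hκ) hc (hne ζ₀ hcl0))
    have htend : Filter.Tendsto (fun s : ℝ => (s:ℂ) * ζ₀) (nhdsWithin 1 (Set.Iio 1)) (nhds ζ₀) := by
      have : Continuous (fun s : ℝ => (s:ℂ) * ζ₀) := by fun_prop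
      have := this.tendsto 1
      simp only [ofReal_one, one_mul] at this
      exact this.mono_left nhdsWithin_le_nhds
    have hstr : ∀ᶠ s : ℝ in nhdsWithin 1 (Set.Iio 1), ∀ k, rr n κ θ (x k) * ‖(s:ℂ) * ζ₀‖ < ‖fa ρ x k (s * ζ₀)‖ := by
      rw [Filter.eventually_all]
      intro k
      have ho : IsOpen {ζ : ℂ | rr n κ θ (x k) * ‖ζ‖ < ‖fa ρ x k ζ‖} :=
        isOpen_lt (continuous_const.mul continuous_norm) (hfc k).norm
      exact htend.eventually (ho.mem_nhds (hstrict k))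
    have hpos : ∀ᶠ s : ℝ in nhdsWithin 1 (Set.Iio 1), 0 < s :=
      Filter.Eventually.filter_mono nhdsWithin_le_nhds (lt_mem_nhds one_pos)
    obtain ⟨s, ⟨⟨hs1, hs2⟩, hs3⟩, hs4⟩ := (((hrad.and hstr).and hpos).and self_mem_nhdsWithin).exists
    have hs4 : s < 1 := hs4
    have hsU : (s:ℂ) * ζ₀ ∈ U := by
      refine ⟨?_, hs2⟩
      rw [norm_mul, hc, mul_one, Complex.norm_real, Real.norm_eq_abs, abs_of_pos hs3]; exact hs4
    have := hmax' _ (subset_closure hsU)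
    linarith

lemma lower (hF : Fek n ρ κ N Q b x M) (hκ : 2*n+3 ≤ κ) {θ : ℝ} (hθ : 0 < θ) (hθ1 : θ ≤ 1)
    {z : ℂ} (hθz : θ ≤ |z.im|) :
    θ * M / (72 * κ^2 * 8^(2*n+3)) ≤ ‖ww Q x z‖ * (3 * (‖z‖+4)^(2*n+3) * Real.exp (κ * (‖z‖+3)^n * (‖z‖+2)) *
      (4 * (3 + ‖z‖))^(2*(2*n+3)) * Real.exp (8*(2*n+3))) := by
  have hρ := hF.pot.hρ
  have hM := hF.hM
  have hκ1 : 1 ≤ κ := by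
    have : (0:ℝ) ≤ n := by positivity
    linarith
  obtain ⟨ζ, h0, h1, hJ⟩ := exists_zeta hρ z
  have hc0 : 0 < θ * M / (72 * κ^2 * 8^(2*n+3)) := by positivity
  have hlt : ‖ζ‖ < 1 := by
    refine lt_of_le_of_ne h1 fun h => ?_
    rw [J_circle ρ h] at hJ
    rw [← hJ, ofReal_im] at hθz
    simp at hθz; linarith
  have hn0 := norm_pos_iff.mpr h0
  have hkk : ∀ k, rr n κ θ (x k) < ‖z - x k‖ := by
    intro k
    have a := (rr_le (n := n) hκ1 hθ hθ1 (hF.hx k)).1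
    have b := abs_im_le_norm (z - x k)
    rw [sub_im, ofReal_im, sub_zero] at b
    linarith
  have hb := GG_bound hF hκ hθ hθ1 hlt (by
    intro k
    rw [fa_eq ρ x k h0, norm_mul, hJ, mul_comm]
    exact mul_lt_mul_of_pos_left (hkk k) hn0)
  set c0 := θ * M / (72 * κ^2 * 8^(2*n+3))
  set m := 2*n+3 with hm
  rw [norm_GG hF.pot x m h0, hJ] at hb
  have hwpos : 0 < ‖ww Q x z‖ := by
    rw [norm_pos_iff, ww]
    refine mul_ne_zero (exp_ne_zero _) (Finset.prod_ne_zero_iff.mpr fun k _ => ?_)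
    rw [← norm_pos_iff]
    exact (rr_pos (n := n) hκ1 hθ (hF.hx k)).trans (hkk k)
  have hA := AA_low hρ h1
  have hApos : 0 < ‖AA ρ ζ‖ := by linarith
  rw [div_mul_eq_mul_div, div_le_iff₀ (by positivity)] at hb
  -- phi
  have lip := phi_lip hF.pot h0 (ζ' := -1) (by simp) h1 (by simp) (by rw [J]; norm_num) (K := ‖z‖+1) (by rw [hJ]; linarith)
    (by rw [J]; norm_num)
  have hJ1 : J ρ (-1) = 1 := by rw [J]; push_cast; ring
  rw [hJ, hJ1, phi_circle N b (ζ := -1) (by simp), sub_zero] at lip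
  have hz1 : ‖z - 1‖ ≤ ‖z‖ + 2 := (norm_sub_le _ _).trans (by simp)
  have hphi : - phi N b ζ ≤ κ * (‖z‖+3)^n * (‖z‖+2) := by
    refine (neg_le_abs _).trans (lip.trans ?_)
    rw [show ‖z‖ + 1 + 2 = ‖z‖ + 3 by ring]
    gcongr
  have hAA : ‖AA ρ ζ‖^(4*m) ≤ (4 * (3 + ‖z‖))^(2*m) := by
    rw [show 4*m = 2*(2*m) by ring, pow_mul]
    gcongr
    have := AA_upp hρ h0 h1
    rw [hJ] at this
    linarith
  have hh := hh2_upp hρ h1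
  have hexp : Real.exp (2*m*tau ρ * (hh2 ρ ζ).re) ≤ Real.exp (8*(2*n+3)) := by
    apply Real.exp_le_exp.mpr
    have e : (m:ℝ) = 2*n+3 := by rw [hm]; push_cast; ring
    rw [← e]
    have : (0:ℝ) ≤ m := by positivity
    nlinarith
  have hinv := inv_norm_le hρ h0 h1
  rw [hJ] at hinv
  have hinvm : 1 ≤ ‖ζ‖^m * (‖z‖+4)^m := by rw [← mul_pow]; exact one_le_pow₀ hinv
  calc c0 = 1 * c0 := by ring
    _ ≤ (‖ζ‖^m * (‖z‖+4)^m) * c0 := by gcongr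
    _ = (‖ζ‖^m * c0) * (‖z‖+4)^m := by ring
    _ ≤ (3 * (‖ww Q x z‖ * Real.exp (- phi N b ζ) * (‖AA ρ ζ‖^(4*m) * Real.exp (2*m*tau ρ * (hh2 ρ ζ).re)))) * (‖z‖+4)^m := by gcongr
    _ ≤ (3 * (‖ww Q x z‖ * Real.exp (κ * (‖z‖+3)^n * (‖z‖+2)) * ((4 * (3 + ‖z‖))^(2*m) * Real.exp (8*(2*n+3))))) * (‖z‖+4)^m := by gcongr
    _ = _ := by ring

end Part9

section Part10
variable {n : ℕ} {ρ κ : ℝ} {N : ℕ} {Q b : ℝ[X]} {x : Fin N → ℝ} {M : ℝ}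

lemma sq_coeff {n : ℕ} (hn : 1 ≤ n) (V : ℝ[X]) (hV : V.natDegree ≤ n) :
    (V^2).natDegree ≤ 2*n ∧ (V^2).coeff (2*n) = (V.coeff n)^2 ∧
      (V^2).coeff (2*n-1) = 2 * V.coeff n * V.coeff (n-1) := by
  set a := V.coeff n with ha
  set V1 := V - C a * X^n with hV1
  have hd1 : V1.natDegree ≤ n - 1 := by
    rw [natDegree_le_iff_coeff_eq_zero]
    intro m hm
    rw [hV1, coeff_sub, coeff_C_mul, coeff_X_pow]
    by_cases h : m = n
    · simp [h, ha]
    · have : V.coeff m = 0 := coeff_eq_zero_of_natDegree_lt (by omega)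
      simp [h, this]
  have hc1 : V1.coeff (n-1) = V.coeff (n-1) := by
    rw [hV1, coeff_sub, coeff_C_mul, coeff_X_pow, if_neg (by omega)]; ring
  have hsq : (V1^2).natDegree ≤ 2*n-2 := by
    refine natDegree_pow_le.trans ?_
    omega
  have e : V^2 = C (a^2) * X^(2*n) + C (2*a) * (V1 * X^n) + V1^2 := by
    rw [hV1]; simp only [C_mul, C_pow]
    rw [show (C (2:ℝ) : ℝ[X]) = 2 from rfl]; ring
  refine ⟨natDegree_pow_le.trans (by omega), ?_, ?_⟩
  · rw [e, coeff_add, coeff_add, coeff_C_mul, coeff_C_mul, coeff_X_pow, show 2*n = n+n by ring, coeff_mul_X_pow,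
      coeff_eq_zero_of_natDegree_lt (show V1.natDegree < n by omega),
      coeff_eq_zero_of_natDegree_lt (show (V1^2).natDegree < n+n by omega)]
    simp
  · rw [e, coeff_add, coeff_add, coeff_C_mul, coeff_C_mul, coeff_X_pow, show 2*n-1 = (n-1)+n by omega, coeff_mul_X_pow,
      coeff_eq_zero_of_natDegree_lt (show (V1^2).natDegree < (n-1)+n by omega), hc1, if_neg (by omega)]
    ring

lemma crit (hF : Fek n ρ κ N Q b x M) (hpos : ∀ k, 0 < x k) (k : Fin N) :
    (derivative Q).eval (x k) * (∏ j ∈ Finset.univ.erase k, (X - C (x j))).eval (x k) +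
      (derivative (∏ j ∈ Finset.univ.erase k, (X - C (x j)))).eval (x k) = 0 := by
  set p := ∏ j ∈ Finset.univ.erase k, (X - C (x j)) with hp
  have hq : ∀ t : ℝ, ‖qq Q x k (t:ℂ)‖ = |Real.exp (Q.eval t) * p.eval t| := by
    intro t
    rw [norm_qq_real, hp, eval_prod, abs_mul, Finset.abs_prod, abs_of_pos (Real.exp_pos _)]
    simp
  have hmax : IsLocalMax (fun t => (Real.exp (Q.eval t) * p.eval t)^2) (x k) := by
    filter_upwards [lt_mem_nhds (hpos k)] with t ht
    rw [sq_le_sq, ← hq, ← hq]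
    exact hF.one k t ht.le
  have hd : HasDerivAt (fun t => Real.exp (Q.eval t) * p.eval t)
      (Real.exp (Q.eval (x k)) * (derivative Q).eval (x k) * p.eval (x k) +
        Real.exp (Q.eval (x k)) * (derivative p).eval (x k)) (x k) :=
    (Q.hasDerivAt (x k)).exp.mul (p.hasDerivAt (x k))
  have h0 := hmax.hasDerivAt_eq_zero (hd.pow 2)
  have hne : p.eval (x k) ≠ 0 := by
    rw [hp, eval_prod]
    refine Finset.prod_ne_zero_iff.mpr fun j hj => ?_
    simp only [eval_sub, eval_X, eval_C, sub_ne_zero]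
    intro h
    exact Finset.ne_of_mem_erase hj (hF.inj h).symm
  have he := Real.exp_ne_zero (Q.eval (x k))
  simp only [Nat.cast_ofNat] at h0
  have h1 : Real.exp (Q.eval (x k)) * (Real.exp (Q.eval (x k)) * p.eval (x k)) * 2 ≠ 0 := by positivity
  apply mul_left_cancel₀ h1
  rw [mul_zero, ← h0]; ring

lemma ode (hF : Fek n ρ κ N Q b x M) (hpos : ∀ k, 0 < x k) :
    ∃ P : ℝ[X], P.natDegree ≤ 2*n ∧ P.coeff (2*n) = -(κ/ρ)^2 ∧ P.coeff (2*n-1) = 2*κ^2 ∧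
      ∀ z : ℂ, iteratedDeriv 2 (ww Q x) z + aeval z P * ww Q x z = 0 := by
  have hn := hF.pot.hn
  have hρ := hF.pot.hρ
  set p : ℝ[X] := ∏ j, (X - C (x j)) with hp
  have hmonic : p.Monic := monic_prod_of_monic _ _ fun j _ => monic_X_sub_C _
  have hpdeg : p.natDegree = N := by
    rw [hp, natDegree_prod_of_monic _ _ fun j _ => monic_X_sub_C _]; simp
  set R : ℝ[X] := derivative (derivative p) + 2 * derivative Q * derivative p with hR
  have hdvd : p ∣ R := by
    rw [hp]
    apply Finset.prod_dvd_of_coprime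
    · intro i _ j _ hij
      exact pairwise_coprime_X_sub_C hF.inj hij
    · intro k _
      rw [dvd_iff_isRoot, IsRoot.def]
      have hc := crit hF hpos k
      have e : p = (X - C (x k)) * ∏ j ∈ Finset.univ.erase k, (X - C (x j)) := by
        exact (Finset.mul_prod_erase Finset.univ (fun j => X - C (x j)) (Finset.mem_univ k)).symm
      set pk := ∏ j ∈ Finset.univ.erase k, (X - C (x j))
      rw [hR, e]
      simp only [derivative_mul, derivative_sub, derivative_X, derivative_C, derivative_add, eval_add,
        eval_mul, eval_sub, eval_X, eval_C, eval_ofNat, sub_zero, one_mul]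
      linear_combination 2 * hc
  obtain ⟨S, hS⟩ := hdvd
  have hQ' : (derivative Q).natDegree ≤ n := (natDegree_derivative_le Q).trans (by have := hF.pot.deg; omega)
  have hQ'' : (derivative (derivative Q)).natDegree ≤ n - 1 := (natDegree_derivative_le _).trans (by omega)
  have hN := hF.pot.hN
  have hp' : (derivative p).natDegree ≤ N - 1 := (natDegree_derivative_le p).trans (by omega)
  have hp'' : (derivative (derivative p)).natDegree ≤ N - 1 := (natDegree_derivative_le _).trans (by omega)
  have hRd : R.natDegree ≤ N + n - 1 := by
    refine (natDegree_add_le _ _).trans (max_le (by omega) ?_)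
    refine natDegree_mul_le.trans ?_
    have : (2 * derivative Q).natDegree ≤ n := by
      rw [show (2:ℝ[X]) = C 2 from rfl]
      exact (natDegree_C_mul_le _ _).trans hQ'
    omega
  have hSd : S.natDegree ≤ n - 1 := by
    by_cases h0 : S = 0
    · simp [h0]
    · rw [hS, hmonic.natDegree_mul' h0, hpdeg] at hRd
      omega
  obtain ⟨s1, s2, s3⟩ := sq_coeff hn (derivative Q) hQ'
  have c1 : (derivative Q).coeff n = -(κ/ρ) := by rw [coeff_derivative]; exact hF.pot.top
  have c2 : (derivative Q).coeff (n-1) = κ * ρ := by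
    rw [coeff_derivative, ← hF.pot.sub, Nat.sub_add_cancel hn, Nat.cast_sub hn]; push_cast; ring
  refine ⟨-S - derivative (derivative Q) - (derivative Q)^2, ?_, ?_, ?_, ?_⟩
  · refine (natDegree_sub_le _ _).trans (max_le ((natDegree_sub_le _ _).trans (max_le ?_ ?_)) s1)
    · rw [natDegree_neg]; omega
    · omega
  · rw [coeff_sub, coeff_sub, coeff_neg, s2, c1, coeff_eq_zero_of_natDegree_lt (show S.natDegree < 2*n by omega),
      coeff_eq_zero_of_natDegree_lt (show (derivative (derivative Q)).natDegree < 2*n by omega)]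
    ring
  · rw [coeff_sub, coeff_sub, coeff_neg, s3, c1, c2, coeff_eq_zero_of_natDegree_lt (show S.natDegree < 2*n-1 by omega),
      coeff_eq_zero_of_natDegree_lt (show (derivative (derivative Q)).natDegree < 2*n-1 by omega)]
    field_simp
    ring
  · intro z
    have ew : ww Q x = fun z => exp (aeval z Q) * aeval z p := by
      funext z
      rw [ww, hp, map_prod]; simp
    have d1 : deriv (ww Q x) = fun z => exp (aeval z Q) * (aeval z (derivative Q * p + derivative p)) := by
      funext z
      rw [ew]
      have := ((aeval_hasDerivAt Q z).cexp.mul (aeval_hasDerivAt p z)).deriv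
      refine this.trans ?_
      simp only [map_add, map_mul]; ring
    have d2 : iteratedDeriv 2 (ww Q x) z = exp (aeval z Q) * aeval z (derivative Q * (derivative Q * p + derivative p) +
        derivative (derivative Q * p + derivative p)) := by
      rw [iteratedDeriv_succ, iteratedDeriv_one, d1]
      have := ((aeval_hasDerivAt Q z).cexp.mul (aeval_hasDerivAt (derivative Q * p + derivative p) z)).deriv
      refine this.trans ?_
      simp only [map_add, map_mul]; ring
    rw [d2, ew]
    have key : derivative Q * (derivative Q * p + derivative p) +
        derivative (derivative Q * p + derivative p) + (-S - derivative (derivative Q) - (derivative Q)^2) * p = 0 := by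
      rw [derivative_add, derivative_mul]
      rw [hR] at hS
      linear_combination hS
    have := congrArg (fun q => exp (aeval z Q) * aeval z q) key
    simp only [map_add, map_mul, map_zero, mul_zero] at this ⊢
    rw [← this]; ring

end Part10

section Part11
open Filter Topology in
lemma limit_aux {m : ℕ} (hm : 1 ≤ m) (W : ℕ → ℂ → ℂ) (P : ℕ → ℂ[X]) (B : ℝ → ℝ) (hBm : Monotone B)
    (hd : ∀ j, Differentiable ℂ (W j)) (hB : ∀ j z, ‖W j z‖ ≤ B ‖z‖) (c : ℂ → ℝ)
    (hc : ∀ z : ℂ, z.im ≠ 0 → 0 < c z ∧ ∀ j, c z ≤ ‖W j z‖)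
    (hdeg : ∀ j, (P j).natDegree ≤ m) (him : ∀ j k, ((P j).coeff k).im = 0)
    (htop : Tendsto (fun j => (P j).coeff m) atTop (𝓝 0)) {δ : ℝ} (hδ : 0 < δ)
    (hsub : ∀ j, δ ≤ ((P j).coeff (m-1)).re)
    (hode : ∀ j z, iteratedDeriv 2 (W j) z + (P j).eval z * W j z = 0) :
    ∃ (Q : ℂ[X]) (w : ℂ → ℂ), Q.degree = ((m-1 : ℕ) : WithBot ℕ) ∧ (∀ k, (Q.coeff k).im = 0) ∧ Differentiable ℂ w ∧
      w ≠ 0 ∧ (∀ z : ℂ, iteratedDeriv 2 w z + Q.eval z * w z = 0) ∧ (∀ z : ℂ, w z = 0 → z.im = 0) := by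
  set F : Ultrafilter ℕ := hyperfilter ℕ
  have hF : (F : Filter ℕ) ≤ atTop := Nat.hyperfilter_le_atTop
  have hlim : ∀ z, ∃ y, Tendsto (fun j => W j z) F (𝓝 y) := by
    intro z
    have hK : IsCompact (Metric.closedBall (0:ℂ) (B ‖z‖)) := isCompact_closedBall _ _
    obtain ⟨y, _, hy⟩ := hK.ultrafilter_le_nhds' (F.map (fun j => W j z)) (by
      rw [Ultrafilter.mem_map]
      exact Filter.mem_of_superset Filter.univ_mem fun j _ => by simpa using hB j z)
    exact ⟨y, hy⟩
  choose w hw using hlim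
  have heq : ∀ z₀, EquicontinuousAt W z₀ := by
    intro z₀
    refine Metric.equicontinuousAt_of_continuity_modulus (fun z => 2 * B (‖z₀‖+1) / 1 * dist z z₀) ?_ W ?_
    · have : Continuous (fun z => 2 * B (‖z₀‖+1) / 1 * dist z z₀) := by fun_prop
      have h := this.tendsto z₀
      simpa using h
    · filter_upwards [Metric.ball_mem_nhds z₀ one_pos] with z hz j
      rw [dist_comm]
      refine Complex.dist_le_div_mul_dist_of_mapsTo_ball (hd j).differentiableOn ?_ hz
      intro y hy
      have hy' : ‖y‖ ≤ ‖z₀‖ + 1 := by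
        have h1 := norm_le_norm_add_norm_sub' y z₀
        rw [Metric.mem_ball, dist_eq_norm] at hy
        linarith
      have h2 := (hB j y).trans (hBm hy')
      have h3 := (hB j z₀).trans (hBm (show ‖z₀‖ ≤ ‖z₀‖ + 1 by linarith))
      rw [Metric.mem_closedBall, dist_eq_norm]
      linarith [norm_sub_le (W j y) (W j z₀)]
  have hloc : TendstoLocallyUniformlyOn W w F Set.univ := by
    rw [tendstoLocallyUniformlyOn_iff_forall_isCompact isOpen_univ]
    intro K _ hK
    have h1 := (EquicontinuousOn.tendsto_uniformOnFun_iff_pi (𝔖 := {K : Set ℂ | IsCompact K}) (F := W) (fun K hK => hK)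
      (Set.eq_univ_of_forall fun z => ⟨{z}, isCompact_singleton, rfl⟩)
      (fun K _ z _ => (heq z).equicontinuousWithinAt K) (F : Filter ℕ) w).mpr (tendsto_pi_nhds.mpr hw)
    exact UniformOnFun.tendsto_iff_tendstoUniformlyOn.mp h1 K hK
  have hev : ∀ᶠ j in (F : Filter ℕ), DifferentiableOn ℂ (W j) Set.univ :=
    Eventually.of_forall fun j => (hd j).differentiableOn
  have hwd : Differentiable ℂ w := differentiableOn_univ.mp (hloc.differentiableOn hev isOpen_univ)
  have hloc1 := hloc.deriv hev isOpen_univ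
  have hloc2 := hloc1.deriv (Eventually.of_forall fun j => ((hd j).deriv).differentiableOn) isOpen_univ
  have hd2 : ∀ z, Tendsto (fun j => iteratedDeriv 2 (W j) z) F (𝓝 (iteratedDeriv 2 w z)) := by
    intro z
    have := hloc2.tendsto_at (Set.mem_univ z)
    simpa only [iteratedDeriv_succ, iteratedDeriv_zero, Function.comp_apply] using this
  have hlow : ∀ z : ℂ, z.im ≠ 0 → w z ≠ 0 := by
    intro z hz
    obtain ⟨c1, c2⟩ := hc z hz
    have : c z ≤ ‖w z‖ := ge_of_tendsto (hw z).norm (Eventually.of_forall c2)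
    exact norm_pos_iff.mp (c1.trans_le this)
  -- interpolation
  set v : ℕ → ℂ := fun i => (i:ℂ) + I with hv
  have hvim : ∀ i, (v i).im ≠ 0 := fun i => by simp [hv]
  have hvinj : Set.InjOn v (Finset.range (m+1) : Finset ℕ) := by
    intro i _ j _ h
    simpa [hv] using h
  have hval : ∀ i, Tendsto (fun j => (P j).eval (v i)) F (𝓝 (- iteratedDeriv 2 w (v i) / w (v i))) := by
    intro i
    have h1 := ((hd2 (v i)).neg).div (hw (v i)) (hlow _ (hvim i))
    refine h1.congr fun j => ?_
    have h2 := hode j (v i)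
    have h3 : W j (v i) ≠ 0 := by
      obtain ⟨c1, c2⟩ := hc _ (hvim i)
      exact norm_pos_iff.mp (c1.trans_le (c2 j))
    simp only [Pi.div_apply, Pi.neg_apply]
    rw [div_eq_iff h3]
    linear_combination -h2
  have hcoef : ∀ k, ∃ p, Tendsto (fun j => (P j).coeff k) F (𝓝 p) := by
    intro k
    refine ⟨∑ i ∈ Finset.range (m+1), (- iteratedDeriv 2 w (v i) / w (v i)) *
      (Lagrange.basis (Finset.range (m+1)) v i).coeff k, ?_⟩
    have : ∀ j, (P j).coeff k = ∑ i ∈ Finset.range (m+1), (P j).eval (v i) *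
      (Lagrange.basis (Finset.range (m+1)) v i).coeff k := by
      intro j
      have h1 := Lagrange.eq_interpolate (f := P j) hvinj (by
        rw [Finset.card_range]
        exact degree_le_natDegree.trans_lt (by exact_mod_cast (hdeg j).trans_lt (Nat.lt_succ_self m)))
      conv_lhs => rw [h1]
      rw [Lagrange.interpolate_apply, finsetSum_coeff]
      simp only [coeff_C_mul]
    simp only [this]
    exact tendsto_finsetSum _ fun i _ => (hval i).mul_const _
  choose p hp using hcoef
  have hpm : p m = 0 := tendsto_nhds_unique (hp m) (htop.mono_left hF)
  have hpbig : ∀ k, m < k → p k = 0 := by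
    intro k hk
    refine tendsto_nhds_unique (hp k) ?_
    have : (fun j => (P j).coeff k) = fun _ => 0 := by
      funext j; exact coeff_eq_zero_of_natDegree_lt ((hdeg j).trans_lt hk)
    rw [this]; exact tendsto_const_nhds
  have hpim : ∀ k, (p k).im = 0 := by
    intro k
    have := (continuous_im.tendsto _).comp (hp k)
    refine tendsto_nhds_unique this ?_
    have e : (im ∘ fun j => (P j).coeff k) = fun _ => 0 := by
      funext j; exact him j k
    rw [e]; exact tendsto_const_nhds
  have hpsub : p (m-1) ≠ 0 := by
    have : δ ≤ (p (m-1)).re := ge_of_tendsto ((continuous_re.tendsto _).comp (hp (m-1))) (Eventually.of_forall hsub)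
    intro h
    rw [h, zero_re] at this
    linarith
  set R : ℂ[X] := ∑ k ∈ Finset.range (m+1), C (p k) * X^k with hR
  have hRc : ∀ k, R.coeff k = p k := by
    intro k
    rw [hR, finsetSum_coeff]
    simp only [coeff_C_mul_X_pow]
    rw [Finset.sum_ite_eq]
    split_ifs with h
    · rfl
    · exact (hpbig k (by simpa using h)).symm
  refine ⟨R, w, ?_, fun k => by rw [hRc, hpim], hwd, ?_, ?_, ?_⟩
  · apply le_antisymm
    · rw [degree_le_iff_coeff_zero]
      intro k hk
      have hk' : m - 1 < k := by exact_mod_cast hk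
      rw [hRc]
      rcases eq_or_lt_of_le (show m ≤ k by omega) with h | h
      · rw [← h, hpm]
      · exact hpbig k h
    · exact le_degree_of_ne_zero (by rw [hRc]; exact hpsub)
  · intro h
    exact hlow I (by simp) (by rw [h]; rfl)
  · intro z
    have h1 : Tendsto (fun j => (P j).eval z) F (𝓝 (R.eval z)) := by
      have e1 : R.eval z = ∑ k ∈ Finset.range (m+1), p k * z^k := by
        rw [hR, eval_finsetSum]; simp
      have e2 : ∀ j, (P j).eval z = ∑ k ∈ Finset.range (m+1), (P j).coeff k * z^k := fun j =>
        eval_eq_sum_range' ((hdeg j).trans_lt (Nat.lt_succ_self m)) z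
      simp only [e1, e2]
      exact tendsto_finsetSum _ fun k _ => (hp k).mul_const _
    have h2 := (hd2 z).add (h1.mul (hw z))
    refine tendsto_nhds_unique h2 ?_
    simp only [hode]
    exact tendsto_const_nhds
  · intro z hz
    by_contra h
    exact hlow z h hz

end Part11

section Part12
noncomputable def upB (n : ℕ) (K r : ℝ) : ℝ :=
  2 * (3 + max r 0) * Real.exp (K * (max r 0 + 2)^n * max r 0)

noncomputable def loD (n : ℕ) (K : ℝ) (z : ℂ) : ℝ :=
  3*(‖z‖+4)^(2*n+3)*Real.exp (K*(‖z‖+3)^n*(‖z‖+2))*(4*(3+‖z‖))^(2*(2*n+3))*Real.exp (8*(2*n+3))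

noncomputable def loC (n : ℕ) (K : ℝ) (z : ℂ) : ℝ :=
  min 1 |z.im| / (72*K^2*8^(2*n+3)) / loD n K z

lemma loD_pos (n : ℕ) (K : ℝ) (z : ℂ) : 0 < loD n K z := by
  unfold loD
  have := norm_nonneg z
  positivity

lemma upB_mono (n : ℕ) {K : ℝ} (hK : 0 ≤ K) : Monotone (upB n K) := by
  intro r s h
  have h1 : max r 0 ≤ max s 0 := max_le_max_right 0 h
  have h2 : 0 ≤ max r 0 := le_max_right _ _
  unfold upB
  gcongr

lemma exists_step (n : ℕ) (hn : 1 ≤ n) (κ₀ : ℝ) (h1 : 1 ≤ κ₀) (h2 : 2*n+3 ≤ κ₀)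
    (h3 : 16*3^n*(n*(n+1))*Real.exp (-(κ₀/(2*(n*(n+1))))) < 1) (ρ : ℝ) (hρ : 10 ≤ ρ) :
    ∃ (W : ℂ → ℂ) (P : ℂ[X]) (κ : ℝ), κ₀ ≤ κ ∧ κ ≤ 2*κ₀ ∧ Differentiable ℂ W ∧
      (∀ z, ‖W z‖ ≤ upB n (2*κ₀) ‖z‖) ∧ (∀ z : ℂ, z.im ≠ 0 → loC n (2*κ₀) z ≤ ‖W z‖) ∧
      P.natDegree ≤ 2*n ∧ (∀ k, (P.coeff k).im = 0) ∧ P.coeff (2*n) = ((-(κ/ρ)^2 : ℝ) : ℂ) ∧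
      P.coeff (2*n-1) = ((2*κ^2 : ℝ) : ℂ) ∧ ∀ z, iteratedDeriv 2 W z + P.eval z * W z = 0 := by
  obtain ⟨κ, N, Q, b, k1, k2, hP⟩ := exists_pot n hn κ₀ h1 ρ hρ
  obtain ⟨x, M, hF⟩ := exists_fek hP
  have hκ3 : 16*3^n*(n*(n+1))*Real.exp (-(κ/(2*(n*(n+1))))) < 1 := by
    refine lt_of_le_of_lt ?_ h3
    gcongr
  have hpos := unstuck hF hκ3
  obtain ⟨P, p1, p2, p3, p4⟩ := ode hF hpos
  have hM := hF.hM
  have hMc : (M:ℂ) ≠ 0 := by exact_mod_cast hM.ne'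
  have hnorm : ∀ z, ‖(M:ℂ)⁻¹ * ww Q x z‖ = M⁻¹ * ‖ww Q x z‖ := by
    intro z
    rw [norm_mul, norm_inv, Complex.norm_real, Real.norm_eq_abs, abs_of_pos hM]
  refine ⟨fun z => (M:ℂ)⁻¹ * ww Q x z, P.map ofRealHom, κ, k1, k2, ?_, ?_, ?_, ?_, ?_, ?_, ?_, ?_⟩
  · exact (ww_diff Q x).const_mul _
  · intro z
    rw [hnorm, inv_mul_le_iff₀ hM]
    refine (upper_all hF z).trans ?_
    unfold upB
    rw [max_eq_left (norm_nonneg z)]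
    have := norm_nonneg z
    calc _ ≤ 2*M*(3+‖z‖)*Real.exp (2*κ₀*(‖z‖+2)^n*‖z‖) := by gcongr
      _ = _ := by ring
  · intro z hz
    have hz' : 0 < |z.im| := abs_pos.mpr hz
    have hθ : 0 < min 1 |z.im| := lt_min one_pos hz'
    have hl := lower hF (by linarith) hθ (min_le_left _ _) (min_le_right _ _)
    have hκp : 0 < κ := by linarith
    have hn0 := norm_nonneg z
    change _ ≤ ‖ww Q x z‖ * loD n κ z at hl
    have hDD : loD n κ z ≤ loD n (2*κ₀) z := by
      unfold loD
      gcongr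
    rw [hnorm, loC, div_le_iff₀ (loD_pos _ _ _)]
    have h4 : min 1 |z.im| * M/(72*(2*κ₀)^2*8^(2*n+3)) ≤ ‖ww Q x z‖ * loD n (2*κ₀) z := by
      refine le_trans ?_ (hl.trans (by gcongr))
      gcongr
    calc min 1 |z.im| /(72*(2*κ₀)^2*8^(2*n+3)) = M⁻¹ * (min 1 |z.im| * M/(72*(2*κ₀)^2*8^(2*n+3))) := by
          field_simp
      _ ≤ M⁻¹ * (‖ww Q x z‖ * loD n (2*κ₀) z) := by gcongr
      _ = _ := by ring
  · exact natDegree_map_le.trans p1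
  · intro k; rw [coeff_map]; simp
  · rw [coeff_map, p2]; rfl
  · rw [coeff_map, p3]; rfl
  · intro z
    have e : (P.map ofRealHom).eval z = aeval z P := by
      rw [eval_map]; rfl
    have h := p4 z
    have hc : ContDiffAt ℂ (2:ℕ) (ww Q x) z := (ww_diff Q x).contDiff.contDiffAt
    have e2 : iteratedDeriv 2 (fun z => (M:ℂ)⁻¹ * ww Q x z) z = (M:ℂ)⁻¹ * iteratedDeriv 2 (ww Q x) z := by
      exact iteratedDeriv_const_mul_field _ _
    rw [e, e2]
    linear_combination (M:ℂ)⁻¹ * h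

open Filter Topology in
lemma odd_case (n : ℕ) (hn : 1 ≤ n) :
    ∃ (Q : ℂ[X]) (w : ℂ → ℂ), Q.degree = ((2*n-1 : ℕ) : WithBot ℕ) ∧ (∀ k, (Q.coeff k).im = 0) ∧ Differentiable ℂ w ∧
      w ≠ 0 ∧ (∀ z : ℂ, iteratedDeriv 2 w z + Q.eval z * w z = 0) ∧ (∀ z : ℂ, w z = 0 → z.im = 0) := by
  have hn' : (1:ℝ) ≤ n := by exact_mod_cast hn
  have ht : Tendsto (fun κ : ℝ => 16*3^n*(n*(n+1))*Real.exp (-(κ/(2*(n*(n+1)))))) atTop (𝓝 0) := by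
    have h1 : Tendsto (fun κ : ℝ => Real.exp (-(κ/(2*(n*(n+1)))))) atTop (𝓝 0) := by
      refine Real.tendsto_exp_neg_atTop_nhds_zero.comp ?_
      exact tendsto_id.atTop_div_const (by positivity)
    simpa using h1.const_mul (16*3^n*((n:ℝ)*(n+1)))
  obtain ⟨κ₀, h3, h2⟩ := ((ht.eventually (gt_mem_nhds one_pos)).and (eventually_ge_atTop (2*(n:ℝ)+3))).exists
  have h1 : 1 ≤ κ₀ := by linarith
  choose W P κ k1 k2 w1 w2 w3 p1 p2 p3 p4 p5 using fun j : ℕ =>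
    exists_step n hn κ₀ h1 h2 h3 ((j:ℝ)+10) (by have : (0:ℝ) ≤ j := by positivity
                                                linarith)
  refine limit_aux (m := 2*n) (by omega) W P (upB n (2*κ₀)) (upB_mono n (by linarith)) w1 w2 (loC n (2*κ₀)) ?_ p1 p2 ?_
    (δ := 1) one_pos ?_ p5
  · intro z hz
    refine ⟨?_, fun j => w3 j z hz⟩
    have hz' : 0 < |z.im| := abs_pos.mpr hz
    have hθ : 0 < min 1 |z.im| := lt_min one_pos hz'
    have := loD_pos n (2*κ₀) z
    unfold loC
    positivity
  · simp only [p3]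
    rw [← ofReal_zero]
    refine (continuous_ofReal.tendsto 0).comp ?_
    have h4 : Tendsto (fun j : ℕ => κ j / ((j:ℝ)+10)) atTop (𝓝 0) := by
      have h5 : Tendsto (fun j : ℕ => (2*κ₀) / ((j:ℝ)+10)) atTop (𝓝 0) :=
        (tendsto_atTop_add_const_right _ _ tendsto_natCast_atTop_atTop).const_div_atTop _
      refine squeeze_zero (fun j => ?_) (fun j => ?_) h5
      · have := k1 j
        exact div_nonneg (by linarith) (by positivity)
      · have := k2 j
        gcongr
    simpa using (h4.pow 2).neg
  · intro j
    rw [p4, ofReal_re]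
    nlinarith [k1 j]

lemma even_case (k : ℕ) :
    ∃ (Q : ℂ[X]) (w : ℂ → ℂ), Q.degree = ((2*k : ℕ) : WithBot ℕ) ∧ (∀ k, (Q.coeff k).im = 0) ∧ Differentiable ℂ w ∧
      w ≠ 0 ∧ (∀ z : ℂ, iteratedDeriv 2 w z + Q.eval z * w z = 0) ∧ (∀ z : ℂ, w z = 0 → z.im = 0) := by
  have hk : (k:ℂ) + 1 ≠ 0 := by exact_mod_cast Nat.succ_ne_zero k
  have hd1 : ∀ z : ℂ, HasDerivAt (fun z => exp (z^(k+1)/(k+1))) (exp (z^(k+1)/(k+1)) * z^k) z := by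
    intro z
    have := ((hasDerivAt_pow (k+1) z).div_const ((k:ℂ)+1)).cexp
    have e : exp (z^(k+1)/(k+1)) * (((k+1 : ℕ):ℂ) * z^(k+1-1) / ((k:ℂ)+1)) = exp (z^(k+1)/(k+1)) * z^k := by
      rw [Nat.add_sub_cancel]
      push_cast
      field_simp
    rw [← e]
    exact this
  have hd2 : ∀ z : ℂ, HasDerivAt (fun z => exp (z^(k+1)/(k+1)) * z^k)
      (exp (z^(k+1)/(k+1)) * z^k * z^k + exp (z^(k+1)/(k+1)) * (k * z^(k-1))) z := by
    intro z
    exact (hd1 z).mul (hasDerivAt_pow k z)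
  refine ⟨-(X^(2*k) + C (k:ℂ) * X^(k-1)), fun z => exp (z^(k+1)/(k+1)), ?_, ?_, ?_, ?_, ?_, ?_⟩
  · rw [degree_neg]
    rcases Nat.eq_zero_or_pos k with rfl | h
    · simp
    · rw [degree_add_eq_left_of_degree_lt, degree_X_pow]
      rw [degree_X_pow]
      refine (degree_C_mul_X_pow_le _ _).trans_lt ?_
      exact_mod_cast (show k - 1 < 2*k by omega)
  · intro m
    rw [coeff_neg, coeff_add, coeff_C_mul, coeff_X_pow, coeff_X_pow]
    split_ifs <;> simp
  · intro z; exact (hd1 z).differentiableAt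
  · intro h
    exact exp_ne_zero _ (congrFun h 0)
  · intro z
    have e1 : deriv (fun z : ℂ => exp (z^(k+1)/(k+1))) = fun z => exp (z^(k+1)/(k+1)) * z^k := by
      funext z; exact (hd1 z).deriv
    rw [iteratedDeriv_succ, iteratedDeriv_one, e1, (hd2 z).deriv]
    simp only [eval_neg, eval_add, eval_mul, eval_pow, eval_X, eval_C]
    ring
  · intro z h
    exact absurd h (exp_ne_zero _)

end Part12

/-- For every natural number `d`, there exist a real polynomial `P` of degree `d` and a
nonzero entire function `w` satisfying `w'' + P·w = 0` whose zeros are all real. -/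
theorem stmt_0 (d : ℕ) :
    ∃ (P : Polynomial ℂ) (w : ℂ → ℂ),
      P.degree = (d : ℕ) ∧
      (∀ n, (P.coeff n).im = 0) ∧
      Differentiable ℂ w ∧
      w ≠ 0 ∧
      (∀ z : ℂ, iteratedDeriv 2 w z + P.eval z * w z = 0) ∧
      (∀ z : ℂ, w z = 0 → z.im = 0) := by
  rcases Nat.even_or_odd' d with ⟨k, h | h⟩
  · subst h
    exact even_case k
  · obtain ⟨Q, w, h1, h2⟩ := odd_case (k+1) (by omega)
    refine ⟨Q, w, ?_, h2⟩
    rw [h1, h, show 2*(k+1)-1 = 2*k+1 by omega]
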